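/- Assume: if t₀ = min 𝕋 then f satisfies (H∞), (H^rd_loc-Lip) and (H^forw_regr); if t₀ = max 𝕋 then f satisfies (H∞), (H^ld_loc-Lip) and (H^back_stab); if t₀ ≠ inf 𝕋 and t₀ ≠ sup 𝕋 then f satisfies (H∞), (H^rd_loc-Lip), (H^forw_regr), (H^ld_loc-Lip) and (H^back_stab). Then the shifted Δ-Cauchy problem (Δ-CP^σ) has a unique maximal solution (q,I_𝕋); moreover, (q,I_𝕋) is an extension of every other solution of (Δ-CP^σ). -/

import Mathlib

/-!
The shifted equation is solved in integral form. Extend the right-hand side `f(q^σ(t), t)` from `T`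
to the real line by freezing it on each gap, `rhs T f q s = f (q (σ ⌊s⌋)) ⌊s⌋` with
`⌊s⌋ = max (T ∩ (-∞, s])`. Pulling back along `⌊·⌋` turns Δ-null sets into Lebesgue-null sets and
Δ-integrals into Lebesgue integrals, so that a solution on `[a,b]_𝕋` should be a function with
`q v - q u = ∫ s in u..v, rhs T f q s` for `u, v ∈ [a,b]_𝕋`; this is `IntSol`.

The two notions of solution agree. If `q` is absolutely continuous and satisfies the equation
Δ-a.e., the difference `D` of `q` and its integral is absolutely continuous, takes equal values at
the two ends of each gap, and has derivative zero at a.e. point of `T`; then `s ↦ D ⌊s⌋` is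
absolutely continuous on the real interval with derivative zero a.e., hence constant
(`const_of_delta_deriv_zero`, `intSol_of_isSolIccS`). Conversely an integral solution is Lipschitz,
and Lebesgue differentiation gives the Δ-derivative a.e. (`isSolIccS_of_intSol`).

For integral solutions, existence near a dense point is the contraction principle on a short
interval (`exists_local`), and uniqueness near a dense point is the same estimate (`unique_local`).
Across a gap `[r, σ(r)]` the integral equation says `q r = G⁻(r)(q (σ r))`: forwards it has exactly
one solution because `G⁻(r)` is bijective from `Ω` onto the whole space, backwards it has exactly
one solution because `G⁻(r)` maps `Ω` into `Ω` (`step_right`, `step_left`, `unique_step_right`,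
`unique_step_left`). A supremum argument makes uniqueness global (`unique_right`, `unique_left`).

Consequently all solutions agree where they are both defined, and they glue to a function `maxSol`
on the union `maxInterval` of their intervals. The one-step existence results, combined with
concatenation, show that this union contains a pair `a ⊴ t₀ ⊴ b` and that `maxSol` is a solution;
it extends every solution by construction, which gives maximality and uniqueness.
-/

open MeasureTheory Set Filter Classical

noncomputable section
open scoped Classical

/-- The forward jump operator `σ` of a time scale `T`. -/
def tsSigma (T : Set ℝ) (t : ℝ) : ℝ :=
  if ({s | s ∈ T ∧ t < s}).Nonempty then sInf {s | s ∈ T ∧ t < s} else t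

/-- The backward jump operator `ρ` of a time scale `T`. -/
def tsRho (T : Set ℝ) (t : ℝ) : ℝ :=
  if ({s | s ∈ T ∧ s < t}).Nonempty then sSup {s | s ∈ T ∧ s < t} else t

/-- The graininess function `μ(t) = σ(t) - t`. -/
def tsGrain (T : Set ℝ) (t : ℝ) : ℝ := tsSigma T t - t

/-- `t` is a right-scattered point of `T`. -/
def RightScattered (T : Set ℝ) (t : ℝ) : Prop := t < tsSigma T t

/-- `t` is a right-dense point of `T`. -/
def RightDense (T : Set ℝ) (t : ℝ) : Prop := tsSigma T t = t

/-- `t` is a left-scattered point of `T`. -/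
def LeftScattered (T : Set ℝ) (t : ℝ) : Prop := tsRho T t < t

/-- `t` is a left-dense point of `T`. -/
def LeftDense (T : Set ℝ) (t : ℝ) : Prop := tsRho T t = t

/-- `𝕋 \ {sup 𝕋}`: the time scale minus its maximum (if the maximum exists). -/
def tsUpDomain (T : Set ℝ) : Set ℝ := {t | t ∈ T ∧ ¬ IsGreatest T t}

/-- The Lebesgue Δ-measure on the time scale `T`: Lebesgue measure restricted to `T`
plus `Σ_{r ∈ ℛ} μ(r)·δ_r` over right-scattered points `r`. -/
def deltaMeasure (T : Set ℝ) : Measure ℝ :=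
  volume.restrict T +
    Measure.sum (fun r : {t : ℝ // t ∈ T ∧ RightScattered T t} =>
      ENNReal.ofReal (tsGrain T r.1) • Measure.dirac r.1)

/-- Δ-differentiability of `q` at `t`, with Δ-derivative `q'`. -/
def HasDeltaDerivAt {n : ℕ} (T : Set ℝ) (q : ℝ → EuclideanSpace ℝ (Fin n))
    (q' : EuclideanSpace ℝ (Fin n)) (t : ℝ) : Prop :=
  ∀ ε > (0:ℝ), ∃ U ∈ nhds t, ∀ s ∈ U ∩ T,
    ‖q (tsSigma T t) - q s - (tsSigma T t - s) • q'‖ ≤ ε * |tsSigma T t - s|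

/-- Absolute continuity of `q` on `[a,b]_𝕋`. -/
def DeltaAC {n : ℕ} (T : Set ℝ) (a b : ℝ) (q : ℝ → EuclideanSpace ℝ (Fin n)) : Prop :=
  ∀ ε > (0:ℝ), ∃ δ > (0:ℝ), ∀ (m : ℕ) (u v : ℕ → ℝ),
    (∀ k < m, u k ∈ Icc a b ∩ T) → (∀ k < m, v k ∈ Icc a b ∩ T) →
    (∀ k < m, u k ≤ v k) →
    (∀ i < m, ∀ j < m, i ≠ j → Disjoint (Icc (u i) (v i)) (Icc (u j) (v j))) →
    (∑ k ∈ Finset.range m, (v k - u k)) < δ →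
    (∑ k ∈ Finset.range m, ‖q (v k) - q (u k)‖) < ε

/-- `f` is a Δ-Carathéodory function on `Ω × 𝕋\{sup 𝕋}`. -/
def DeltaCaratheodory {n : ℕ} (T : Set ℝ) (Ω : Set (EuclideanSpace ℝ (Fin n)))
    (f : EuclideanSpace ℝ (Fin n) → ℝ → EuclideanSpace ℝ (Fin n)) : Prop :=
  (∀ x ∈ Ω, AEMeasurable (fun t => f x t) ((deltaMeasure T).restrict (tsUpDomain T))) ∧
    ∀ᵐ t ∂((deltaMeasure T).restrict (tsUpDomain T)), ContinuousOn (fun x => f x t) Ω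

/-- Hypothesis (H∞): `f` is locally bounded. -/
def HInfty {n : ℕ} (T : Set ℝ) (Ω : Set (EuclideanSpace ℝ (Fin n)))
    (f : EuclideanSpace ℝ (Fin n) → ℝ → EuclideanSpace ℝ (Fin n)) : Prop :=
  ∀ K : Set (EuclideanSpace ℝ (Fin n)), K ⊆ Ω → IsCompact K →
    ∀ a ∈ T, ∀ b ∈ T, a < b →
      ∃ M : ℝ, 0 ≤ M ∧
        ∀ᵐ t ∂((deltaMeasure T).restrict (Ico a b ∩ T)), ∀ x ∈ K, ‖f x t‖ ≤ M

/-- Hypothesis (H^rd_loc-Lip): local Lipschitz continuity at right-dense points. -/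
def HrdLocLip {n : ℕ} (T : Set ℝ) (Ω : Set (EuclideanSpace ℝ (Fin n)))
    (f : EuclideanSpace ℝ (Fin n) → ℝ → EuclideanSpace ℝ (Fin n)) : Prop :=
  ∀ xb ∈ Ω, ∀ tb ∈ T, ¬ IsGreatest T tb → RightDense T tb →
    ∃ R > (0:ℝ), ∃ δ > (0:ℝ), ∃ L : ℝ, 0 ≤ L ∧
      Metric.closedBall xb R ⊆ Ω ∧ tb + δ ∈ T ∧
      ∀ᵐ t ∂((deltaMeasure T).restrict (Ico tb (tb + δ) ∩ T)),
        ∀ x₁ ∈ Metric.closedBall xb R, ∀ x₂ ∈ Metric.closedBall xb R,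
          ‖f x₁ t - f x₂ t‖ ≤ L * ‖x₁ - x₂‖

/-- Hypothesis (H^ld_loc-Lip): local Lipschitz continuity at left-dense points. -/
def HldLocLip {n : ℕ} (T : Set ℝ) (Ω : Set (EuclideanSpace ℝ (Fin n)))
    (f : EuclideanSpace ℝ (Fin n) → ℝ → EuclideanSpace ℝ (Fin n)) : Prop :=
  ∀ xb ∈ Ω, ∀ tb ∈ T, ¬ IsLeast T tb → LeftDense T tb →
    ∃ R > (0:ℝ), ∃ δ > (0:ℝ), ∃ L : ℝ, 0 ≤ L ∧
      Metric.closedBall xb R ⊆ Ω ∧ tb - δ ∈ T ∧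
      ∀ᵐ t ∂((deltaMeasure T).restrict (Ico (tb - δ) tb ∩ T)),
        ∀ x₁ ∈ Metric.closedBall xb R, ∀ x₂ ∈ Metric.closedBall xb R,
          ‖f x₁ t - f x₂ t‖ ≤ L * ‖x₁ - x₂‖

/-- Hypothesis (H^forw_stab): `G⁺(t) : x ↦ x + μ(t) f(x,t)` maps `Ω` into `Ω`. -/
def HforwStab {n : ℕ} (T : Set ℝ) (Ω : Set (EuclideanSpace ℝ (Fin n)))
    (f : EuclideanSpace ℝ (Fin n) → ℝ → EuclideanSpace ℝ (Fin n)) : Prop :=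
  ∀ t ∈ T, RightScattered T t → ∀ x ∈ Ω, x + tsGrain T t • f x t ∈ Ω

/-- Hypothesis (H^back_regr): `G⁺(t)` is a bijection from `Ω` onto `ℝⁿ`. -/
def HbackRegr {n : ℕ} (T : Set ℝ) (Ω : Set (EuclideanSpace ℝ (Fin n)))
    (f : EuclideanSpace ℝ (Fin n) → ℝ → EuclideanSpace ℝ (Fin n)) : Prop :=
  ∀ t ∈ T, RightScattered T t → Set.BijOn (fun x => x + tsGrain T t • f x t) Ω univ

/-- Hypothesis (H^back_stab): `G⁻(t) : x ↦ x - μ(t) f(x,t)` maps `Ω` into `Ω`. -/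
def HbackStab {n : ℕ} (T : Set ℝ) (Ω : Set (EuclideanSpace ℝ (Fin n)))
    (f : EuclideanSpace ℝ (Fin n) → ℝ → EuclideanSpace ℝ (Fin n)) : Prop :=
  ∀ t ∈ T, RightScattered T t → ∀ x ∈ Ω, x - tsGrain T t • f x t ∈ Ω

/-- Hypothesis (H^forw_regr): `G⁻(t)` is a bijection from `Ω` onto `ℝⁿ`. -/
def HforwRegr {n : ℕ} (T : Set ℝ) (Ω : Set (EuclideanSpace ℝ (Fin n)))
    (f : EuclideanSpace ℝ (Fin n) → ℝ → EuclideanSpace ℝ (Fin n)) : Prop :=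
  ∀ t ∈ T, RightScattered T t → Set.BijOn (fun x => x - tsGrain T t • f x t) Ω univ

/-- Hypothesis (H^glob_Lip): global Lipschitz continuity. -/
def HglobLip {n : ℕ} (T : Set ℝ) (Ω : Set (EuclideanSpace ℝ (Fin n)))
    (f : EuclideanSpace ℝ (Fin n) → ℝ → EuclideanSpace ℝ (Fin n)) : Prop :=
  ∃ L : ℝ, 0 ≤ L ∧
    ∀ᵐ t ∂((deltaMeasure T).restrict (tsUpDomain T)),
      ∀ x₁ ∈ Ω, ∀ x₂ ∈ Ω, ‖f x₁ t - f x₂ t‖ ≤ L * ‖x₁ - x₂‖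

/-- The relation `a ⊴ t₀ ⊴ b`. -/
def Trile (T : Set ℝ) (t₀ a b : ℝ) : Prop :=
  (IsLeast T t₀ ∧ a = t₀ ∧ t₀ < b) ∨
  (IsGreatest T t₀ ∧ a < t₀ ∧ t₀ = b) ∨
  (¬ IsLeast T t₀ ∧ ¬ IsGreatest T t₀ ∧ a < t₀ ∧ t₀ < b)

/-- `(q, [a,b]_𝕋)` is a solution of the non shifted Δ-Cauchy problem (Δ-CP). -/
def IsSolIcc {n : ℕ} (T : Set ℝ) (Ω : Set (EuclideanSpace ℝ (Fin n)))
    (f : EuclideanSpace ℝ (Fin n) → ℝ → EuclideanSpace ℝ (Fin n))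
    (t₀ : ℝ) (q₀ : EuclideanSpace ℝ (Fin n))
    (q : ℝ → EuclideanSpace ℝ (Fin n)) (a b : ℝ) : Prop :=
  (∀ t ∈ Icc a b ∩ T, q t ∈ Ω) ∧ DeltaAC T a b q ∧ q t₀ = q₀ ∧
    ∀ᵐ t ∂((deltaMeasure T).restrict (Ico a b ∩ T)),
      HasDeltaDerivAt T q (f (q t) t) t

/-- `(q, [a,b]_𝕋)` is a solution of the shifted Δ-Cauchy problem (Δ-CP^σ). -/
def IsSolIccS {n : ℕ} (T : Set ℝ) (Ω : Set (EuclideanSpace ℝ (Fin n)))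
    (f : EuclideanSpace ℝ (Fin n) → ℝ → EuclideanSpace ℝ (Fin n))
    (t₀ : ℝ) (q₀ : EuclideanSpace ℝ (Fin n))
    (q : ℝ → EuclideanSpace ℝ (Fin n)) (a b : ℝ) : Prop :=
  (∀ t ∈ Icc a b ∩ T, q t ∈ Ω) ∧ DeltaAC T a b q ∧ q t₀ = q₀ ∧
    ∀ᵐ t ∂((deltaMeasure T).restrict (Ico a b ∩ T)),
      HasDeltaDerivAt T q (f (q (tsSigma T t)) t) t

/-- `I_𝕋 ∈ 𝕀`: `I` is a real interval containing points `a, b` of `T` with `a ⊴ t₀ ⊴ b`. -/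
def MemI (T : Set ℝ) (t₀ : ℝ) (I : Set ℝ) : Prop :=
  I.OrdConnected ∧ ∃ a ∈ I ∩ T, ∃ b ∈ I ∩ T, Trile T t₀ a b

/-- `(q, I_𝕋)` is a solution of (Δ-CP). -/
def IsSol {n : ℕ} (T : Set ℝ) (Ω : Set (EuclideanSpace ℝ (Fin n)))
    (f : EuclideanSpace ℝ (Fin n) → ℝ → EuclideanSpace ℝ (Fin n))
    (t₀ : ℝ) (q₀ : EuclideanSpace ℝ (Fin n))
    (q : ℝ → EuclideanSpace ℝ (Fin n)) (I : Set ℝ) : Prop :=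
  MemI T t₀ I ∧ (∀ t ∈ I ∩ T, q t ∈ Ω) ∧
    ∀ a ∈ I ∩ T, ∀ b ∈ I ∩ T, Trile T t₀ a b → IsSolIcc T Ω f t₀ q₀ q a b

/-- `(q, I_𝕋)` is a solution of (Δ-CP^σ). -/
def IsSolS {n : ℕ} (T : Set ℝ) (Ω : Set (EuclideanSpace ℝ (Fin n)))
    (f : EuclideanSpace ℝ (Fin n) → ℝ → EuclideanSpace ℝ (Fin n))
    (t₀ : ℝ) (q₀ : EuclideanSpace ℝ (Fin n))
    (q : ℝ → EuclideanSpace ℝ (Fin n)) (I : Set ℝ) : Prop :=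
  MemI T t₀ I ∧ (∀ t ∈ I ∩ T, q t ∈ Ω) ∧
    ∀ a ∈ I ∩ T, ∀ b ∈ I ∩ T, Trile T t₀ a b → IsSolIccS T Ω f t₀ q₀ q a b

/-- `(q₁, I₁_𝕋)` is an extension of `(q, I_𝕋)`. -/
def SolExtends {n : ℕ} (T : Set ℝ) (q₁ : ℝ → EuclideanSpace ℝ (Fin n)) (I₁ : Set ℝ)
    (q : ℝ → EuclideanSpace ℝ (Fin n)) (I : Set ℝ) : Prop :=
  I ∩ T ⊆ I₁ ∩ T ∧ EqOn q₁ q (I ∩ T)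

/-- `(q, I_𝕋)` is a maximal solution of (Δ-CP). -/
def IsMaxSol {n : ℕ} (T : Set ℝ) (Ω : Set (EuclideanSpace ℝ (Fin n)))
    (f : EuclideanSpace ℝ (Fin n) → ℝ → EuclideanSpace ℝ (Fin n))
    (t₀ : ℝ) (q₀ : EuclideanSpace ℝ (Fin n))
    (q : ℝ → EuclideanSpace ℝ (Fin n)) (I : Set ℝ) : Prop :=
  IsSol T Ω f t₀ q₀ q I ∧
    ∀ q₁ I₁, IsSol T Ω f t₀ q₀ q₁ I₁ → SolExtends T q₁ I₁ q I → I₁ ∩ T = I ∩ T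

/-- `(q, I_𝕋)` is a maximal solution of (Δ-CP^σ). -/
def IsMaxSolS {n : ℕ} (T : Set ℝ) (Ω : Set (EuclideanSpace ℝ (Fin n)))
    (f : EuclideanSpace ℝ (Fin n) → ℝ → EuclideanSpace ℝ (Fin n))
    (t₀ : ℝ) (q₀ : EuclideanSpace ℝ (Fin n))
    (q : ℝ → EuclideanSpace ℝ (Fin n)) (I : Set ℝ) : Prop :=
  IsSolS T Ω f t₀ q₀ q I ∧
    ∀ q₁ I₁, IsSolS T Ω f t₀ q₀ q₁ I₁ → SolExtends T q₁ I₁ q I → I₁ ∩ T = I ∩ T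

/-! ### Time scales, the floor map and the Δ-measure -/

/-- The largest point of `T` not exceeding `s` (meaningful when `T` is closed and has a point
`≤ s`). Pulling back along `tsFloor T` turns Δ-integrals into Lebesgue integrals. -/
def tsFloor (T : Set ℝ) (s : ℝ) : ℝ := sSup (T ∩ Iic s)

section TimeScale

variable {T : Set ℝ}

lemma floor_le {a s : ℝ} (ha : a ∈ T) (h : a ≤ s) : tsFloor T s ≤ s :=
  csSup_le ⟨a, ha, h⟩ fun _ hx => hx.2

lemma le_floor {t s : ℝ} (ht : t ∈ T) (h : t ≤ s) : t ≤ tsFloor T s :=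
  le_csSup ⟨s, fun _ hx => hx.2⟩ ⟨ht, h⟩

lemma floor_mem (hT : IsClosed T) {a s : ℝ} (ha : a ∈ T) (h : a ≤ s) : tsFloor T s ∈ T :=
  ((hT.inter isClosed_Iic).csSup_mem ⟨a, ha, h⟩ ⟨s, fun _ hx => hx.2⟩).1

lemma floor_of_mem {s : ℝ} (hs : s ∈ T) : tsFloor T s = s :=
  le_antisymm (floor_le hs le_rfl) (le_floor hs le_rfl)

lemma le_sigma (t : ℝ) : t ≤ tsSigma T t := by
  unfold tsSigma
  split_ifs with h
  · exact le_csInf h fun x hx => hx.2.le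
  · exact le_rfl

lemma sigma_le {t s : ℝ} (hs : s ∈ T) (h : t < s) : tsSigma T t ≤ s := by
  unfold tsSigma
  rw [if_pos ⟨s, hs, h⟩]
  exact csInf_le ⟨t, fun x hx => hx.2.le⟩ ⟨hs, h⟩

lemma sigma_mem (hT : IsClosed T) {t : ℝ} (ht : t ∈ T) : tsSigma T t ∈ T := by
  unfold tsSigma
  split_ifs with h
  · have := csInf_mem_closure h ⟨t, fun x hx => hx.2.le⟩
    exact hT.closure_subset_iff.2 (fun x hx => hx.1) this
  · exact ht

lemma rd_or_rs (t : ℝ) : RightDense T t ∨ RightScattered T t := by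
  rcases (le_sigma (T := T) t).eq_or_lt with h | h
  · exact Or.inl h.symm
  · exact Or.inr h

lemma exists_right {t b d : ℝ} (hb : b ∈ T) (htb : t < b) (h : RightDense T t) (hd : t < d) :
    ∃ c ∈ T, t < c ∧ c < d := by
  unfold RightDense tsSigma at h
  have hne : ({s | s ∈ T ∧ t < s}).Nonempty := ⟨b, hb, htb⟩
  rw [if_pos hne] at h
  obtain ⟨c, hc, hcd⟩ := exists_lt_of_csInf_lt hne (h.trans_lt hd)
  exact ⟨c, hc.1, hc.2, hcd⟩

lemma rho_le (t : ℝ) : tsRho T t ≤ t := by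
  unfold tsRho
  split_ifs with h
  · exact csSup_le h fun x hx => hx.2.le
  · exact le_rfl

lemma exists_left {t b d : ℝ} (hb : b ∈ T) (htb : b < t) (h : LeftDense T t) (hd : d < t) :
    ∃ c ∈ T, d < c ∧ c < t := by
  unfold LeftDense tsRho at h
  have hne : ({s | s ∈ T ∧ s < t}).Nonempty := ⟨b, hb, htb⟩
  rw [if_pos hne] at h
  obtain ⟨c, hc, hcd⟩ := exists_lt_of_lt_csSup hne (hd.trans_eq h.symm)
  exact ⟨c, hc.1, hcd, hc.2⟩

lemma rho_mem (hT : IsClosed T) {t : ℝ} (ht : t ∈ T) : tsRho T t ∈ T := by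
  unfold tsRho
  split_ifs with h
  · have := csSup_mem_closure h ⟨t, fun x hx => hx.2.le⟩
    exact hT.closure_subset_iff.2 (fun x hx => hx.1) this
  · exact ht

lemma le_rho {t s : ℝ} (hs : s ∈ T) (h : s < t) : s ≤ tsRho T t := by
  unfold tsRho
  rw [if_pos ⟨s, hs, h⟩]
  exact le_csSup ⟨t, fun x hx => hx.2.le⟩ ⟨hs, h⟩

lemma sigma_rho (hT : IsClosed T) {t : ℝ} (ht : t ∈ T) (h : tsRho T t < t) :
    tsSigma T (tsRho T t) = t := by
  apply le_antisymm (sigma_le ht h)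
  by_contra! hlt
  have h1 := le_rho (sigma_mem hT (rho_mem hT ht)) hlt
  have h2 : RightDense T (tsRho T t) := le_antisymm h1 (le_sigma _)
  obtain ⟨c, hc, h3, h4⟩ := exists_right ht h h2 h
  exact absurd (le_rho hc h4) (not_le.2 h3)

lemma floor_of_gap {r s : ℝ} (hr : r ∈ T) (h1 : r ≤ s) (h2 : s < tsSigma T r) :
    tsFloor T s = r := by
  apply le_antisymm _ (le_floor hr h1)
  refine csSup_le ⟨r, hr, h1⟩ fun x hx => ?_
  by_contra! h
  exact absurd (sigma_le hx.1 h) (not_le.2 (lt_of_le_of_lt hx.2 h2))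

lemma gap_of_notMem (hT : IsClosed T) {a b s : ℝ} (ha : a ∈ T) (hb : b ∈ T) (h1 : a ≤ s)
    (h2 : s < b) (hs : s ∉ T) : tsFloor T s < s ∧ s < tsSigma T (tsFloor T s) := by
  have hm := floor_mem hT ha h1
  have hl : tsFloor T s < s := lt_of_le_of_ne (floor_le ha h1) fun h => hs (h ▸ hm)
  refine ⟨hl, ?_⟩
  by_contra! hle
  have h3 : RightDense T (tsFloor T s) :=
    le_antisymm (le_floor (sigma_mem hT hm) hle) (le_sigma _)
  obtain ⟨c, hc, h4, h5⟩ := exists_right hb (hl.trans h2) h3 hl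
  exact absurd (le_floor hc h5.le) (not_le.2 h4)

lemma le_sigma_floor (hT : IsClosed T) {a b s : ℝ} (ha : a ∈ T) (hb : b ∈ T) (h1 : a ≤ s)
    (h2 : s < b) : s ≤ tsSigma T (tsFloor T s) := by
  by_cases hs : s ∈ T
  · rw [floor_of_mem hs]; exact le_sigma s
  · exact (gap_of_notMem hT ha hb h1 h2 hs).2.le

lemma floor_mem_Ico (hT : IsClosed T) {a b s : ℝ} (ha : a ∈ T) (h : s ∈ Ico a b) :
    tsFloor T s ∈ Ico a b ∩ T :=
  ⟨⟨le_floor ha h.1, (floor_le ha h.1).trans_lt h.2⟩, floor_mem hT ha h.1⟩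

lemma sigma_mem_Icc (hT : IsClosed T) {a b t : ℝ} (hb : b ∈ T) (h : t ∈ Ico a b ∩ T) :
    tsSigma T t ∈ Icc a b ∩ T :=
  ⟨⟨h.1.1.trans (le_sigma t), sigma_le hb h.1.2⟩, sigma_mem hT h.2⟩

lemma sigma_floor_mem (hT : IsClosed T) {a b s : ℝ} (ha : a ∈ T) (hb : b ∈ T) (h : s ∈ Ico a b) :
    tsSigma T (tsFloor T s) ∈ Icc a b ∩ T :=
  sigma_mem_Icc hT hb (floor_mem_Ico hT ha h)

lemma floor_mono {a s s' : ℝ} (ha : a ∈ T) (h : a ≤ s) (hs : s ≤ s') :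
    tsFloor T s ≤ tsFloor T s' :=
  csSup_le_csSup ⟨s', fun _ hx => hx.2⟩ ⟨a, ha, h⟩ fun _ hx => ⟨hx.1, hx.2.trans hs⟩

lemma sigma_floor_mono (hT : IsClosed T) {a b : ℝ} (ha : a ∈ T) :
    MonotoneOn (fun s => tsSigma T (tsFloor T s)) (Ico a b) := by
  intro s hs s' hs' h
  have h1 := floor_mono ha hs.1 h
  rcases h1.eq_or_lt with h2 | h2
  · simp only [h2]; exact le_rfl
  · exact (sigma_le (floor_mem hT ha hs'.1) h2).trans (le_sigma _)

/-- The right-scattered points are the left endpoints of disjoint gaps, hence countable. -/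
lemma countable_rs (T : Set ℝ) : {t : ℝ | t ∈ T ∧ RightScattered T t}.Countable := by
  refine Set.PairwiseDisjoint.countable_of_Ioo (y := tsSigma T) ?_ fun x hx => hx.2
  have key : ∀ x ∈ T, ∀ y ∈ T, x < y → Disjoint (Ioo x (tsSigma T x)) (Ioo y (tsSigma T y)) := by
    intro x _ y hy h
    rw [Set.disjoint_left]
    intro z hz hz'
    exact absurd (sigma_le hy h) (not_le.2 (hz'.1.trans hz.2))
  intro x hx y hy hxy
  rcases lt_or_gt_of_ne hxy with h | h
  · exact key x hx.1 y hy.1 h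
  · exact (key y hy.1 x hx.1 h).symm

/-- A property holds Δ-a.e. iff it holds Lebesgue-a.e. on `T` and at all right-scattered points,
since each of those carries positive Δ-measure. -/
lemma ae_delta_iff (hT : IsClosed T) {S : Set ℝ} (hS : MeasurableSet S) (P : ℝ → Prop) :
    (∀ᵐ t ∂((deltaMeasure T).restrict S), P t) ↔
      (∀ᵐ t ∂(volume : Measure ℝ), t ∈ T → t ∈ S → P t) ∧
        ∀ r ∈ T, RightScattered T r → r ∈ S → P r := by
  have : Countable {t : ℝ // t ∈ T ∧ RightScattered T t} := (countable_rs T).to_subtype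
  rw [ae_restrict_iff' hS]
  unfold deltaMeasure
  rw [ae_add_measure_iff, ae_restrict_iff' hT.measurableSet, Measure.ae_sum_iff]
  refine and_congr Iff.rfl ⟨fun h r hr hrs hS => ?_, fun h r => ?_⟩
  · have h1 := h ⟨r, hr, hrs⟩
    rw [Measure.ae_ennreal_smul_measure_iff, ae_dirac_eq] at h1
    · exact h1 hS
    · have : 0 < tsGrain T r := sub_pos.2 hrs
      simpa using this
  · apply Measure.ae_smul_measure
    rw [ae_dirac_eq]
    exact h r.1 r.2.1 r.2.2

/-- Δ-null sets pull back to Lebesgue-null sets under `tsFloor T`. -/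
lemma ae_pull (hT : IsClosed T) {a b : ℝ} (ha : a ∈ T) (hb : b ∈ T) {S : Set ℝ}
    (hS : MeasurableSet S) (hSs : Ico a b ∩ T ⊆ S) {P : ℝ → Prop}
    (h : ∀ᵐ t ∂((deltaMeasure T).restrict S), P t) :
    ∀ᵐ s ∂((volume : Measure ℝ).restrict (Ico a b)), P (tsFloor T s) := by
  rw [ae_delta_iff hT hS] at h
  rw [ae_restrict_iff' measurableSet_Ico]
  filter_upwards [h.1] with s hs hsab
  have hf := floor_mem_Ico hT ha hsab
  by_cases hsT : s ∈ T
  · rw [floor_of_mem hsT]; exact hs hsT (hSs ⟨hsab, hsT⟩)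
  · have hg := gap_of_notMem hT ha hb hsab.1 hsab.2 hsT
    exact h.2 _ hf.2 (hg.1.trans hg.2) (hSs hf)

end TimeScale

/-! ### Absolutely continuous functions with vanishing Δ-derivative -/

section AbsCont

variable {T : Set ℝ} {n : ℕ}

/-- The defining estimate of `DeltaAC`, for a family indexed by an arbitrary finite set. -/
lemma deltaAC_finset {a b : ℝ} {q : ℝ → EuclideanSpace ℝ (Fin n)} (h : DeltaAC T a b q) :
    ∀ ε > (0:ℝ), ∃ δ > (0:ℝ), ∀ (S : Finset ℕ) (u v : ℕ → ℝ),
      (∀ k ∈ S, u k ∈ Icc a b ∩ T) → (∀ k ∈ S, v k ∈ Icc a b ∩ T) →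
      (∀ k ∈ S, u k ≤ v k) →
      (∀ i ∈ S, ∀ j ∈ S, i ≠ j → Disjoint (Icc (u i) (v i)) (Icc (u j) (v j))) →
      (∑ k ∈ S, (v k - u k)) < δ → (∑ k ∈ S, ‖q (v k) - q (u k)‖) < ε := by
  intro ε hε
  obtain ⟨δ, hδ, H⟩ := h ε hε
  refine ⟨δ, hδ, fun S u v hu hv huv hd hs => ?_⟩
  let e := S.equivFin.symm
  let w : ℕ → ℕ := fun k => if hk : k < S.card then (e ⟨k, hk⟩ : ℕ) else 0
  have hw : ∀ k < S.card, w k ∈ S := fun k hk => by simp [w, hk]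
  have hinj : ∀ i < S.card, ∀ j < S.card, i ≠ j → w i ≠ w j := by
    intro i hi j hj hij h
    simp only [w, hi, hj, dif_pos] at h
    have := e.injective (Subtype.ext h)
    simp only [Fin.mk.injEq] at this
    exact hij this
  have hsum : ∀ F : ℕ → ℝ, ∑ k ∈ Finset.range S.card, F (w k) = ∑ k ∈ S, F k := by
    intro F
    rw [Finset.sum_range, ← Finset.sum_coe_sort S F, ← Equiv.sum_comp e]
    refine Finset.sum_congr rfl fun i _ => ?_
    simp [w]
  have := H S.card (u ∘ w) (v ∘ w) (fun k hk => hu _ (hw k hk)) (fun k hk => hv _ (hw k hk))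
    (fun k hk => huv _ (hw k hk))
    (fun i hi j hj hij => hd _ (hw i hi) _ (hw j hj) (hinj i hi j hj hij))
    (by
      have := hsum fun k => v k - u k
      simpa [this] using hs)
  have h2 := hsum fun k => ‖q (v k) - q (u k)‖
  simpa [h2] using this

lemma DeltaAC.uniform {a b : ℝ} {q : ℝ → EuclideanSpace ℝ (Fin n)} (h : DeltaAC T a b q) :
    ∀ ε > (0:ℝ), ∃ δ > (0:ℝ), ∀ u ∈ Icc a b ∩ T, ∀ v ∈ Icc a b ∩ T, |v - u| < δ →
      ‖q v - q u‖ < ε := by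
  intro ε hε
  obtain ⟨δ, hδ, H⟩ := deltaAC_finset h ε hε
  have key : ∀ u ∈ Icc a b ∩ T, ∀ v ∈ Icc a b ∩ T, u ≤ v → v - u < δ → ‖q v - q u‖ < ε := by
    intro u hu v hv huv hd
    simpa using H {0} (fun _ => u) (fun _ => v) (fun _ _ => hu) (fun _ _ => hv) (fun _ _ => huv)
      (fun i hi j hj hij => absurd ((Finset.mem_singleton.1 hi).trans
        (Finset.mem_singleton.1 hj).symm) hij) (by simpa using hd)
  refine ⟨δ, hδ, fun u hu v hv hd => ?_⟩
  rcases le_total u v with huv | huv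
  · exact key u hu v hv huv ((le_abs_self _).trans_lt hd)
  · rw [norm_sub_rev]
    exact key v hv u hu huv (by rw [abs_sub_comm] at hd; exact (le_abs_self _).trans_lt hd)

lemma DeltaAC.continuousOn {a b : ℝ} {q : ℝ → EuclideanSpace ℝ (Fin n)} (h : DeltaAC T a b q) :
    ContinuousOn q (Icc a b ∩ T) := by
  rw [Metric.continuousOn_iff]
  intro u hu ε hε
  obtain ⟨δ, hδ, H⟩ := h.uniform ε hε
  exact ⟨δ, hδ, fun v hv hd => by
    rw [dist_eq_norm]; exact H u hu v hv (by rwa [Real.dist_eq] at hd)⟩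

/-- If `D` takes equal values at both ends of every gap, then increments of `D ∘ tsFloor T` over
real intervals are increments of `D` over subintervals with endpoints in `T`. -/
lemma floor_increment (hT : IsClosed T) {a b : ℝ} (ha : a ∈ T) (hb : b ∈ T)
    {D : ℝ → EuclideanSpace ℝ (Fin n)}
    (hrs : ∀ r ∈ Ico a b ∩ T, RightScattered T r → D (tsSigma T r) = D r)
    {u v : ℝ} (hu : u ∈ Icc a b) (hv : v ∈ Icc a b) (huv : u ≤ v) :
    D (tsFloor T u) = D (tsFloor T v) ∨
      ∃ u' ∈ Icc a b ∩ T, ∃ v' ∈ Icc a b ∩ T, u ≤ u' ∧ u' ≤ v' ∧ v' ≤ v ∧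
        D (tsFloor T u) = D u' ∧ D (tsFloor T v) = D v' := by
  have hv' : tsFloor T v ∈ Icc a b ∩ T :=
    ⟨⟨le_floor ha hv.1, (floor_le ha hv.1).trans hv.2⟩, floor_mem hT ha hv.1⟩
  by_cases huT : u ∈ T
  · refine Or.inr ⟨u, ⟨hu, huT⟩, _, hv', le_rfl, le_floor huT huv, floor_le ha hv.1, ?_, rfl⟩
    rw [floor_of_mem huT]
  · have hub : u < b := lt_of_le_of_ne hu.2 fun h => huT (h ▸ hb)
    have hfu := floor_mem_Ico hT ha ⟨hu.1, hub⟩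
    have hg := gap_of_notMem hT ha hb hu.1 hub huT
    have he := hrs _ hfu (hg.1.trans hg.2)
    rcases lt_or_ge v (tsSigma T (tsFloor T u)) with h | h
    · left
      rw [floor_of_gap hfu.2 (hg.1.le.trans huv) h]
    · exact Or.inr ⟨_, sigma_mem_Icc hT hb hfu, _, hv', hg.2.le,
        le_floor (sigma_mem hT hfu.2) h, floor_le ha hv.1, he.symm, rfl⟩

/-- Absolute continuity of `D` on `[a,b]_𝕋` passes to `D ∘ tsFloor T` on the real interval `[a,b]`.
Intervals that merely share endpoints are first shrunk slightly, which continuity permits. -/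
lemma floor_ac (hT : IsClosed T) {a b : ℝ} (hab : a ≤ b) (ha : a ∈ T) (hb : b ∈ T)
    {D : ℝ → EuclideanSpace ℝ (Fin n)} (hD : DeltaAC T a b D)
    (hrs : ∀ r ∈ Ico a b ∩ T, RightScattered T r → D (tsSigma T r) = D r) :
    AbsolutelyContinuousOnInterval (fun s => D (tsFloor T s)) a b := by
  have hcont : ContinuousOn (fun s => D (tsFloor T s)) (Icc a b) := by
    rw [Metric.continuousOn_iff]
    intro u hu ε hε
    obtain ⟨δ, hδ, H⟩ := hD.uniform ε hε
    have key : ∀ u ∈ Icc a b, ∀ v ∈ Icc a b, u ≤ v → v - u < δ →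
        ‖D (tsFloor T v) - D (tsFloor T u)‖ < ε := by
      intro u hu v hv huv hd
      rcases floor_increment hT ha hb hrs hu hv huv with h | ⟨u', hu', v', hv', h1, h2, h3, h4, h5⟩
      · rw [h]; simpa using hε
      · rw [h4, h5]
        exact H u' hu' v' hv' (by rw [abs_of_nonneg (by linarith)]; linarith)
    refine ⟨δ, hδ, fun v hv hd => ?_⟩
    rw [Real.dist_eq] at hd
    rw [dist_eq_norm]
    rcases le_total u v with huv | huv
    · exact key u hu v hv huv ((le_abs_self _).trans_lt hd)
    · rw [norm_sub_rev]
      exact key v hv u hu huv (by rw [abs_sub_comm] at hd; exact (le_abs_self _).trans_lt hd)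
  -- the estimate for families of pairwise disjoint closed intervals
  have hclosed : ∀ ε > (0:ℝ), ∃ δ > (0:ℝ), ∀ (S : Finset ℕ) (u v : ℕ → ℝ),
      (∀ k ∈ S, u k ∈ Icc a b) → (∀ k ∈ S, v k ∈ Icc a b) → (∀ k ∈ S, u k ≤ v k) →
      (∀ i ∈ S, ∀ j ∈ S, i ≠ j → Disjoint (Icc (u i) (v i)) (Icc (u j) (v j))) →
      (∑ k ∈ S, (v k - u k)) < δ →
      (∑ k ∈ S, ‖D (tsFloor T (v k)) - D (tsFloor T (u k))‖) < ε := by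
    intro ε hε
    obtain ⟨δ, hδ, H⟩ := deltaAC_finset hD ε hε
    refine ⟨δ, hδ, fun S u v hu hv huv hdis hsum => ?_⟩
    let S' := S.filter fun k => D (tsFloor T (u k)) ≠ D (tsFloor T (v k))
    have hS' : ∀ k ∈ S', ∃ u' v' : ℝ, u' ∈ Icc a b ∩ T ∧ v' ∈ Icc a b ∩ T ∧ u k ≤ u' ∧ u' ≤ v' ∧
        v' ≤ v k ∧ D (tsFloor T (u k)) = D u' ∧ D (tsFloor T (v k)) = D v' := by
      intro k hk
      obtain ⟨hk1, hk2⟩ := Finset.mem_filter.1 hk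
      rcases floor_increment hT ha hb hrs (hu k hk1) (hv k hk1) (huv k hk1) with
        h | ⟨u', hu', v', hv', h⟩
      · exact absurd h hk2
      · exact ⟨u', v', hu', hv', h⟩
    choose! u' v' hu' hv' h1 h2 h3 h4 h5 using hS'
    have hsub : ∀ k ∈ S', k ∈ S := fun k hk => (Finset.mem_filter.1 hk).1
    have hlt := H S' u' v' hu' hv' h2
      (fun i hi j hj hij => (hdis i (hsub i hi) j (hsub j hj) hij).mono
        (Icc_subset_Icc (h1 i hi) (h3 i hi)) (Icc_subset_Icc (h1 j hj) (h3 j hj)))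
      (lt_of_le_of_lt (calc
        ∑ k ∈ S', (v' k - u' k) ≤ ∑ k ∈ S', (v k - u k) :=
          Finset.sum_le_sum fun k hk => by linarith [h1 k hk, h3 k hk]
        _ ≤ ∑ k ∈ S, (v k - u k) :=
          Finset.sum_le_sum_of_subset_of_nonneg (Finset.filter_subset _ _)
            fun k hk _ => sub_nonneg.2 (huv k hk)) hsum)
    have heq : ∑ k ∈ S, ‖D (tsFloor T (v k)) - D (tsFloor T (u k))‖ =
        ∑ k ∈ S', ‖D (v' k) - D (u' k)‖ := by
      rw [← Finset.sum_subset (Finset.filter_subset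
        (fun k => D (tsFloor T (u k)) ≠ D (tsFloor T (v k))) S)]
      · exact Finset.sum_congr rfl fun k hk => by rw [h4 k hk, h5 k hk]
      · intro k hk hk'
        have : D (tsFloor T (u k)) = D (tsFloor T (v k)) := by
          by_contra hne
          exact hk' (Finset.mem_filter.2 ⟨hk, hne⟩)
        simp [this]
    rw [heq]; exact hlt
  rw [absolutelyContinuousOnInterval_iff]
  intro ε hε
  obtain ⟨δ, hδ, H⟩ := hclosed (ε / 2) (half_pos hε)
  refine ⟨δ, hδ, ?_⟩
  rintro ⟨m, E⟩ ⟨hE1, hE2⟩ hsum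
  simp only [uIcc_of_le hab] at hE1
  set u : ℕ → ℝ := fun k => min (E k).1 (E k).2 with hu_def
  set v : ℕ → ℝ := fun k => max (E k).1 (E k).2 with hv_def
  set G : ℝ → EuclideanSpace ℝ (Fin n) := fun s => D (tsFloor T s) with hG
  have hdist : ∀ k, dist (G (E k).1) (G (E k).2) = ‖G (v k) - G (u k)‖ := by
    intro k
    rcases le_total (E k).1 (E k).2 with h | h
    · simp [u, v, h, dist_eq_norm, norm_sub_rev]
    · simp [u, v, h, dist_eq_norm]
  have hlen : ∀ k, dist (E k).1 (E k).2 = v k - u k := by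
    intro k
    rw [Real.dist_eq]; exact (max_sub_min_eq_abs' _ _).symm
  have hu : ∀ k < m, u k ∈ Icc a b := fun k hk => by
    have := hE1 k (Finset.mem_range.2 hk)
    exact ⟨le_min this.1.1 this.2.1, (min_le_left _ _).trans this.1.2⟩
  have hv : ∀ k < m, v k ∈ Icc a b := fun k hk => by
    have := hE1 k (Finset.mem_range.2 hk)
    exact ⟨this.1.1.trans (le_max_left _ _), max_le this.1.2 this.2.2⟩
  have huv : ∀ k, u k ≤ v k := fun k => min_le_max
  have hdis : ∀ i < m, ∀ j < m, i ≠ j → Disjoint (Ioc (u i) (v i)) (Ioc (u j) (v j)) :=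
    fun i hi j hj hij => hE2 (by simpa using hi) (by simpa using hj) hij
  change ∑ i ∈ Finset.range m, dist (G (E i).1) (G (E i).2) < ε
  simp only [hdist, hlen] at hsum ⊢
  let S := (Finset.range m).filter fun k => u k < v k
  have hS : ∀ k ∈ S, k < m ∧ u k < v k := fun k hk => by
    simpa using Finset.mem_filter.1 hk
  have hbound : ∀ η ∈ Ioo (0:ℝ) 1,
      ∑ k ∈ S, ‖G (v k) - G (u k + η * (v k - u k))‖ < ε / 2 := by
    intro η hη
    refine H S (fun k => u k + η * (v k - u k)) v ?_ ?_ ?_ ?_ ?_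
    · intro k hk
      have h1 := hS k hk
      have h2 := hu k h1.1
      have h3 := hv k h1.1
      constructor
      · nlinarith [h2.1, hη.1]
      · nlinarith [h3.2, hη.2]
    · exact fun k hk => hv k (hS k hk).1
    · intro k hk
      nlinarith [(hS k hk).2, hη.2]
    · intro i hi j hj hij
      refine (hdis i (hS i hi).1 j (hS j hj).1 hij).mono ?_ ?_
      · intro x hx
        exact ⟨by nlinarith [hx.1, (hS i hi).2, hη.1], hx.2⟩
      · intro x hx
        exact ⟨by nlinarith [hx.1, (hS j hj).2, hη.1], hx.2⟩
    · refine lt_of_le_of_lt (calc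
        ∑ k ∈ S, (v k - (u k + η * (v k - u k))) ≤ ∑ k ∈ S, (v k - u k) :=
          Finset.sum_le_sum fun k hk => by nlinarith [(hS k hk).2, hη.1]
        _ ≤ ∑ k ∈ Finset.range m, (v k - u k) :=
          Finset.sum_le_sum_of_subset_of_nonneg (Finset.filter_subset _ _)
            fun k hk _ => sub_nonneg.2 (huv k)) hsum
  have hlim : Tendsto (fun η : ℝ => ∑ k ∈ S, ‖G (v k) - G (u k + η * (v k - u k))‖)
      (nhdsWithin 0 (Ioo 0 1)) (nhds (∑ k ∈ S, ‖G (v k) - G (u k)‖)) := by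
    refine tendsto_finsetSum _ fun k hk => Tendsto.norm (Tendsto.const_sub _ ?_)
    refine Tendsto.comp (g := G) (hcont _ (hu k (hS k hk).1)) (tendsto_nhdsWithin_iff.2 ⟨?_, ?_⟩)
    · have : Tendsto (fun η : ℝ => u k + η * (v k - u k)) (nhds 0)
          (nhds (u k + 0 * (v k - u k))) := by
        apply Continuous.tendsto; fun_prop
      rw [zero_mul, add_zero] at this
      exact this.mono_left nhdsWithin_le_nhds
    · filter_upwards [self_mem_nhdsWithin] with η hη
      have h1 := hS k hk
      have h2 := hu k h1.1
      have h3 := hv k h1.1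
      constructor
      · nlinarith [h2.1, hη.1]
      · nlinarith [h3.2, hη.2]
  have hne : (nhdsWithin (0:ℝ) (Ioo 0 1)).NeBot := by
    rw [nhdsWithin_Ioo_eq_nhdsGT zero_lt_one]; infer_instance
  have hle : ∑ k ∈ S, ‖G (v k) - G (u k)‖ ≤ ε / 2 :=
    le_of_tendsto hlim (by
      filter_upwards [self_mem_nhdsWithin] with η hη using (hbound η hη).le)
  have heq : ∑ k ∈ Finset.range m, ‖G (v k) - G (u k)‖ = ∑ k ∈ S, ‖G (v k) - G (u k)‖ := by
    refine (Finset.sum_subset (Finset.filter_subset _ _) fun k hk hk' => ?_).symm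
    have : u k = v k := by
      by_contra hne
      exact hk' (Finset.mem_filter.2 ⟨hk, lt_of_le_of_ne (huv k) hne⟩)
    simp [this]
  rw [heq]; linarith

/-- An absolutely continuous function on `[a,b]_𝕋` whose Δ-derivative vanishes Δ-a.e. is constant:
`D ∘ tsFloor T` is absolutely continuous on `[a,b]` with derivative zero a.e. -/
lemma const_of_delta_deriv_zero (hT : IsClosed T) {a b : ℝ} (hab : a ≤ b) (ha : a ∈ T) (hb : b ∈ T)
    {D : ℝ → EuclideanSpace ℝ (Fin n)} (hD : DeltaAC T a b D)
    (hrs : ∀ r ∈ Ico a b ∩ T, RightScattered T r → D (tsSigma T r) = D r)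
    (hder : ∀ᵐ t ∂(volume : Measure ℝ), t ∈ T → t ∈ Ioo a b → ∀ ε > (0:ℝ),
      ∀ᶠ s in nhds t, s ∈ T → ‖D s - D t‖ ≤ ε * |s - t|) :
    ∀ t ∈ Icc a b ∩ T, D t = D a := by
  have hac := floor_ac hT hab ha hb hD hrs
  have hz : ∀ᵐ x, x ∈ uIcc a b → HasDerivAt (fun s => D (tsFloor T s)) 0 x := by
    have hna : ∀ᵐ x : ℝ, x ≠ a := by simp [ae_iff, measure_singleton]
    have hnb : ∀ᵐ x : ℝ, x ≠ b := by simp [ae_iff, measure_singleton]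
    filter_upwards [hder, hna, hnb] with x hx h1 h2 hxab
    rw [uIcc_of_le hab] at hxab
    have hxo : x ∈ Ioo a b := ⟨lt_of_le_of_ne hxab.1 h1.symm, lt_of_le_of_ne hxab.2 h2⟩
    by_cases hxT : x ∈ T
    · rw [hasDerivAt_iff_isLittleO, Asymptotics.isLittleO_iff]
      intro ε hε
      obtain ⟨η, hη, hball⟩ := Metric.eventually_nhds_iff.1 (hx hxT hxo ε hε)
      filter_upwards [Metric.ball_mem_nhds x hη, Ioo_mem_nhds hxo.1 hxo.2] with s hs hso
      rw [Metric.mem_ball, Real.dist_eq] at hs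
      have hsI : s ∈ Icc a b := ⟨hso.1.le, hso.2.le⟩
      simp only [smul_zero, sub_zero, floor_of_mem hxT, Real.norm_eq_abs]
      -- a point of `T` between `x` and `s` where `D` has the value `D (tsFloor T s)`
      have hbt : D (tsFloor T s) = D x ∨ ∃ t ∈ T, |t - x| ≤ |s - x| ∧ D (tsFloor T s) = D t := by
        rcases le_total x s with h | h
        · right
          refine ⟨tsFloor T s, floor_mem hT ha hsI.1, ?_, rfl⟩
          have h3 := le_floor hxT h
          have h4 := floor_le ha hsI.1
          rw [abs_of_nonneg (by linarith), abs_of_nonneg (by linarith)]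
          linarith
        · rcases floor_increment hT ha hb hrs hsI hxab h with h' | ⟨u', hu', v', hv', g⟩
          · left; rw [h', floor_of_mem hxT]
          · right
            refine ⟨u', hu'.2, ?_, g.2.2.2.1⟩
            rw [abs_of_nonpos (by linarith [g.1, g.2.1, g.2.2.1]), abs_of_nonpos (by linarith)]
            linarith [g.1]
      rcases hbt with h' | ⟨t, htT, ht, h'⟩
      · rw [h', sub_self, norm_zero]; positivity
      · rw [h']
        refine (hball (y := t) (by rw [Real.dist_eq]; linarith) htT).trans ?_
        gcongr
    · have hfx := floor_mem_Ico hT ha ⟨hxab.1, hxo.2⟩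
      have hg := gap_of_notMem hT ha hb hxab.1 hxo.2 hxT
      refine (hasDerivAt_const x (D (tsFloor T x))).congr_of_eventuallyEq ?_
      filter_upwards [Ioo_mem_nhds hg.1 hg.2] with s hs
      rw [floor_of_gap hfx.2 hs.1.le hs.2]
  obtain ⟨C, hC⟩ := hac.const_of_ae_hasDerivAt_zero hz
  rw [uIcc_of_le hab] at hC
  intro t ht
  have h1 := hC t ht.1
  have h2 := hC a ⟨le_rfl, hab⟩
  simp only [floor_of_mem ht.2, floor_of_mem ha] at h1 h2
  rw [h1, h2]

end AbsCont

/-! ### Solutions in integral form -/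

section IntegralForm

variable {n : ℕ} {T : Set ℝ} {Ω : Set (EuclideanSpace ℝ (Fin n))}
  {f : EuclideanSpace ℝ (Fin n) → ℝ → EuclideanSpace ℝ (Fin n)}

lemma ae_Ioc_iff_Ico {a b : ℝ} {P : ℝ → Prop} :
    (∀ᵐ s ∂((volume : Measure ℝ).restrict (Ioc a b)), P s) ↔
      ∀ᵐ s ∂((volume : Measure ℝ).restrict (Ico a b)), P s := by
  rw [Measure.restrict_congr_set Ico_ae_eq_Ioc]

lemma floor_aemeasurable {a b : ℝ} (ha : a ∈ T) :
    AEMeasurable (tsFloor T) ((volume : Measure ℝ).restrict (Ico a b)) :=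
  aemeasurable_restrict_of_monotoneOn measurableSet_Ico
    fun _ hs _ _ hst => floor_mono ha hs.1 hst

lemma measurableSet_upDomain (hT : IsClosed T) : MeasurableSet (tsUpDomain T) := by
  have : tsUpDomain T = T \ {t | IsGreatest T t} := rfl
  rw [this]
  refine hT.measurableSet.diff (Set.Subsingleton.measurableSet ?_)
  exact fun x hx y hy => hx.unique hy

/-- A Carathéodory function composed with a measurable function is measurable, after pulling the
time variable back along `tsFloor T`. -/
lemma caratheodory_comp (hT : IsClosed T) (hf : DeltaCaratheodory T Ω f) {a b : ℝ} (ha : a ∈ T)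
    (hb : b ∈ T) {x₀ : EuclideanSpace ℝ (Fin n)} (hx₀ : x₀ ∈ Ω)
    {g : ℝ → EuclideanSpace ℝ (Fin n)}
    (hg : AEMeasurable g ((volume : Measure ℝ).restrict (Ico a b)))
    (hgΩ : ∀ᵐ s ∂((volume : Measure ℝ).restrict (Ico a b)), g s ∈ Ω) :
    AEMeasurable (fun s => f (g s) (tsFloor T s)) ((volume : Measure ℝ).restrict (Ico a b)) := by
  have hsub : Ico a b ∩ T ⊆ tsUpDomain T := fun t ht =>
    ⟨ht.2, fun h => absurd (h.2 hb) (not_le.2 ht.1.2)⟩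
  have hm := measurableSet_upDomain hT
  have hconst : ∀ x ∈ Ω, AEMeasurable (fun s => f x (tsFloor T s))
      ((volume : Measure ℝ).restrict (Ico a b)) := by
    intro x hx
    have h := hf.1 x hx
    exact (h.measurable_mk.comp_aemeasurable (floor_aemeasurable ha)).congr
      ((ae_pull hT ha hb hm hsub h.ae_eq_mk).mono fun s hs => hs.symm)
  have hsimple : ∀ φ : SimpleFunc ℝ (EuclideanSpace ℝ (Fin n)), (∀ s, φ s ∈ Ω) →
      AEMeasurable (fun s => f (φ s) (tsFloor T s)) ((volume : Measure ℝ).restrict (Ico a b)) := by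
    intro φ hφ
    have : (fun s => f (φ s) (tsFloor T s)) = fun s => ∑ x ∈ φ.range,
        (φ ⁻¹' {x}).indicator (fun s => f x (tsFloor T s)) s := by
      funext s
      rw [Finset.sum_eq_single (φ s)]
      · simp
      · intro x _ hx
        exact indicator_of_notMem (fun h => hx (by simpa using h.symm)) _
      · intro h; exact absurd (φ.mem_range_self s) h
    rw [this]
    refine Finset.aemeasurable_fun_sum _ fun x hx => ?_
    obtain ⟨s, rfl⟩ := SimpleFunc.mem_range.1 hx
    exact (hconst _ (hφ s)).indicator (φ.measurableSet_fiber _)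
  have hφ := fun k s => SimpleFunc.approxOn_mem hg.measurable_mk hx₀ k s
  refine aemeasurable_of_tendsto_metrizable_ae' (fun k => hsimple _ (hφ k)) ?_
  filter_upwards [hg.ae_eq_mk, hgΩ, ae_pull hT ha hb hm hsub hf.2] with s hs hsΩ hc
  refine (hc _ hsΩ).tendsto.comp (tendsto_nhdsWithin_iff.2 ⟨?_, Eventually.of_forall fun k => hφ k s⟩)
  rw [hs]
  exact SimpleFunc.tendsto_approxOn _ _ (subset_closure (hs ▸ hsΩ))

/-- The right-hand side `f(q^σ(t), t)` of the shifted equation, extended from `T` to the real line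
as a function that is constant on the gaps of `T`. -/
def rhs (T : Set ℝ) (f : EuclideanSpace ℝ (Fin n) → ℝ → EuclideanSpace ℝ (Fin n))
    (q : ℝ → EuclideanSpace ℝ (Fin n)) (s : ℝ) : EuclideanSpace ℝ (Fin n) :=
  f (q (tsSigma T (tsFloor T s))) (tsFloor T s)

/-- Solutions of the shifted equation on `[a,b]_𝕋` in integral form: since the Δ-integral over
`[u,v)_𝕋` of a function is the Lebesgue integral over `[u,v)` of its extension constant on gaps,
`q v - q u` is required to be the ordinary integral of `rhs T f q`. -/
structure IntSol (T : Set ℝ) (Ω : Set (EuclideanSpace ℝ (Fin n)))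
    (f : EuclideanSpace ℝ (Fin n) → ℝ → EuclideanSpace ℝ (Fin n))
    (q : ℝ → EuclideanSpace ℝ (Fin n)) (a b : ℝ) : Prop where
  mem : ∀ t ∈ Icc a b ∩ T, q t ∈ Ω
  int : IntervalIntegrable (rhs T f q) volume a b
  eq : ∀ u ∈ Icc a b ∩ T, ∀ v ∈ Icc a b ∩ T, q v - q u = ∫ s in u..v, rhs T f q s

lemma intInt_sub {g : ℝ → EuclideanSpace ℝ (Fin n)} {a b u v : ℝ}
    (h : IntervalIntegrable g volume a b) (hu : u ∈ Icc a b) (hv : v ∈ Icc a b) :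
    IntervalIntegrable g volume u v := by
  refine h.mono_set ?_
  have hab : a ≤ b := hu.1.trans hu.2
  rw [uIcc_of_le hab]
  exact uIcc_subset_Icc hu hv

/-- To be an integral solution it suffices to satisfy the integral equation from one base point. -/
lemma IntSol.of_base {q : ℝ → EuclideanSpace ℝ (Fin n)} {a b e : ℝ} (he : e ∈ Icc a b)
    (hm : ∀ t ∈ Icc a b ∩ T, q t ∈ Ω) (hi : IntervalIntegrable (rhs T f q) volume a b)
    (h : ∀ t ∈ Icc a b ∩ T, q t = q e + ∫ s in e..t, rhs T f q s) : IntSol T Ω f q a b := by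
  refine ⟨hm, hi, fun u hu v hv => ?_⟩
  rw [h u hu, h v hv, add_sub_add_left_eq_sub]
  exact intervalIntegral.integral_interval_sub_left (intInt_sub hi he hv.1) (intInt_sub hi he hu.1)

lemma IntSol.mono {q : ℝ → EuclideanSpace ℝ (Fin n)} {a b c d : ℝ} (h : IntSol T Ω f q a b)
    (hac : a ≤ c) (hcd : c ≤ d) (hdb : d ≤ b) : IntSol T Ω f q c d :=
  have hs := Icc_subset_Icc hac hdb
  ⟨fun t ht => h.mem t ⟨hs ht.1, ht.2⟩,
    intInt_sub h.int ⟨hac, hcd.trans hdb⟩ ⟨hac.trans hcd, hdb⟩,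
    fun u hu v hv => h.eq u ⟨hs hu.1, hu.2⟩ v ⟨hs hv.1, hv.2⟩⟩

lemma rhs_congr (hT : IsClosed T) {q p : ℝ → EuclideanSpace ℝ (Fin n)} {a b : ℝ} (ha : a ∈ T)
    (hb : b ∈ T) (h : EqOn p q (Icc a b ∩ T)) : EqOn (rhs T f p) (rhs T f q) (Ico a b) := by
  intro s hs
  unfold rhs
  rw [h (sigma_floor_mem hT ha hb hs)]

lemma IntSol.congr (hT : IsClosed T) {q p : ℝ → EuclideanSpace ℝ (Fin n)} {a b : ℝ} (hab : a ≤ b)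
    (ha : a ∈ T) (hb : b ∈ T) (hq : IntSol T Ω f q a b) (h : EqOn p q (Icc a b ∩ T)) :
    IntSol T Ω f p a b := by
  have hr : EqOn (rhs T f p) (rhs T f q) (Ico a b) := rhs_congr hT ha hb h
  have hne : ∀ᵐ s : ℝ, s ≠ b := by simp [ae_iff, measure_singleton]
  refine ⟨fun t ht => by rw [h ht]; exact hq.mem t ht, hq.int.congr_ae ?_, fun u hu v hv => ?_⟩
  · rw [uIoc_of_le hab]
    refine ae_Ioc_iff_Ico.2 ?_
    rw [ae_restrict_iff' measurableSet_Ico]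
    exact Eventually.of_forall fun s hs => (hr hs).symm
  · rw [h hu, h hv, hq.eq u hu v hv]
    refine intervalIntegral.integral_congr_ae ?_
    filter_upwards [hne] with s hs hs'
    have h1 : s ∈ Icc a b := by
      have := uIoc_subset_uIcc hs'
      exact uIcc_subset_Icc hu.1 hv.1 this
    exact (hr ⟨h1.1, lt_of_le_of_ne h1.2 hs⟩).symm

lemma IntSol.glue {q : ℝ → EuclideanSpace ℝ (Fin n)} {a b c : ℝ} (hab : a ≤ b) (hbc : b ≤ c)
    (hb : b ∈ T) (h1 : IntSol T Ω f q a b) (h2 : IntSol T Ω f q b c) : IntSol T Ω f q a c := by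
  refine IntSol.of_base (e := b) ⟨hab, hbc⟩ ?_ (h1.int.trans h2.int) ?_
  · intro t ht
    rcases le_total t b with h | h
    · exact h1.mem t ⟨⟨ht.1.1, h⟩, ht.2⟩
    · exact h2.mem t ⟨⟨h, ht.1.2⟩, ht.2⟩
  · intro t ht
    rcases le_total t b with h | h
    · rw [← h1.eq b ⟨⟨hab, le_rfl⟩, hb⟩ t ⟨⟨ht.1.1, h⟩, ht.2⟩]; abel
    · rw [← h2.eq b ⟨⟨le_rfl, hbc⟩, hb⟩ t ⟨⟨h, ht.1.2⟩, ht.2⟩]; abel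

/-- Solutions on adjacent intervals that agree at the common endpoint can be concatenated. -/
lemma IntSol.concat (hT : IsClosed T) {p q : ℝ → EuclideanSpace ℝ (Fin n)} {a b c : ℝ}
    (hab : a ≤ b) (hbc : b ≤ c) (ha : a ∈ T) (hb : b ∈ T) (hc : c ∈ T)
    (h1 : IntSol T Ω f p a b) (h2 : IntSol T Ω f q b c) (he : p b = q b) :
    IntSol T Ω f (fun s => if s ≤ b then p s else q s) a c := by
  refine IntSol.glue hab hbc hb (h1.congr hT hab ha hb ?_) (h2.congr hT hbc hb hc ?_)
  · intro t ht
    simp [ht.1.2]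
  · intro t ht
    rcases eq_or_lt_of_le ht.1.1 with h | h
    · subst h; simp [he]
    · simp [not_le.2 h]

lemma IntSol.continuousOn {q : ℝ → EuclideanSpace ℝ (Fin n)} {a b : ℝ} (hab : a ≤ b) (ha : a ∈ T)
    (h : IntSol T Ω f q a b) : ContinuousOn q (Icc a b ∩ T) := by
  have hc := intervalIntegral.continuousOn_primitive_interval' h.int left_mem_uIcc
  rw [uIcc_of_le hab] at hc
  refine ((continuousOn_const (c := q a)).add (hc.mono inter_subset_left)).congr fun t ht => ?_
  change q t = q a + ∫ s in a..t, rhs T f q s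
  rw [← h.eq a ⟨⟨le_rfl, hab⟩, ha⟩ t ht]
  abel

lemma aemeasurable_shift (hT : IsClosed T) {q : ℝ → EuclideanSpace ℝ (Fin n)} {a b : ℝ}
    (ha : a ∈ T) (hb : b ∈ T) (hq : ContinuousOn q (Icc a b ∩ T)) :
    AEMeasurable (fun s => q (tsSigma T (tsFloor T s)))
      ((volume : Measure ℝ).restrict (Ico a b)) := by
  have hK : MeasurableSet (Icc a b ∩ T) := measurableSet_Icc.inter hT.measurableSet
  have h1 : Measurable ((Icc a b ∩ T).piecewise q 0) :=
    hq.measurable_piecewise continuousOn_const hK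
  have h2 : AEMeasurable (fun s => tsSigma T (tsFloor T s))
      ((volume : Measure ℝ).restrict (Ico a b)) :=
    aemeasurable_restrict_of_monotoneOn measurableSet_Ico (sigma_floor_mono hT ha)
  refine (h1.comp_aemeasurable h2).congr ?_
  rw [EventuallyEq, ae_restrict_iff' measurableSet_Ico]
  refine Eventually.of_forall fun s hs => ?_
  exact piecewise_eq_of_mem _ _ _ (sigma_floor_mem hT ha hb hs)

/-- Along a function with values in a compact part of `Ω`, the right-hand side is essentially
bounded and integrable. -/
lemma rhs_integrable (hT : IsClosed T) (hf : DeltaCaratheodory T Ω f)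
    {q : ℝ → EuclideanSpace ℝ (Fin n)} {a b M : ℝ} (hab : a ≤ b) (ha : a ∈ T) (hb : b ∈ T)
    (hq : ContinuousOn q (Icc a b ∩ T)) (hm : ∀ t ∈ Icc a b ∩ T, q t ∈ Ω)
    (hM : ∀ᵐ t ∂((deltaMeasure T).restrict (Ico a b ∩ T)),
      ∀ x ∈ q '' (Icc a b ∩ T), ‖f x t‖ ≤ M) :
    (∀ᵐ s ∂((volume : Measure ℝ).restrict (Ico a b)), ‖rhs T f q s‖ ≤ M) ∧
      IntervalIntegrable (rhs T f q) volume a b := by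
  have hb1 : ∀ᵐ s ∂((volume : Measure ℝ).restrict (Ico a b)), ‖rhs T f q s‖ ≤ M := by
    have h := ae_pull hT ha hb (measurableSet_Ico.inter hT.measurableSet) subset_rfl hM
    filter_upwards [h, ae_restrict_mem measurableSet_Ico] with s hs hsI
    exact hs _ (mem_image_of_mem q (sigma_floor_mem hT ha hb hsI))
  refine ⟨hb1, ?_⟩
  rw [intervalIntegrable_iff_integrableOn_Ioc_of_le hab, IntegrableOn,
    ← Measure.restrict_congr_set (Ico_ae_eq_Ioc (μ := volume))]
  have hmeas : AEMeasurable (rhs T f q) ((volume : Measure ℝ).restrict (Ico a b)) :=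
    caratheodory_comp hT hf ha hb (hm a ⟨⟨le_rfl, hab⟩, ha⟩) (aemeasurable_shift hT ha hb hq) (by
      filter_upwards [ae_restrict_mem measurableSet_Ico] with s hsI
      exact hm _ (sigma_floor_mem hT ha hb hsI))
  exact Integrable.of_bound hmeas.aestronglyMeasurable M hb1

lemma rhs_bound (hT : IsClosed T) (hf : DeltaCaratheodory T Ω f) (hI : HInfty T Ω f)
    {q : ℝ → EuclideanSpace ℝ (Fin n)} {a b : ℝ} (hab : a < b) (ha : a ∈ T) (hb : b ∈ T)
    (hq : ContinuousOn q (Icc a b ∩ T)) (hm : ∀ t ∈ Icc a b ∩ T, q t ∈ Ω) :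
    ∃ M : ℝ, 0 ≤ M ∧ (∀ᵐ s ∂((volume : Measure ℝ).restrict (Ico a b)), ‖rhs T f q s‖ ≤ M) ∧
      IntervalIntegrable (rhs T f q) volume a b := by
  have hK : IsCompact (q '' (Icc a b ∩ T)) := (isCompact_Icc.inter_right hT).image_of_continuousOn hq
  obtain ⟨M, hM0, hM⟩ := hI _ (by rintro _ ⟨t, ht, rfl⟩; exact hm t ht) hK a ha b hb hab
  exact ⟨M, hM0, rhs_integrable hT hf hab.le ha hb hq hm hM⟩

lemma norm_integral_le_of_bound {h : ℝ → EuclideanSpace ℝ (Fin n)} {a b M u v : ℝ}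
    (hM : ∀ᵐ s ∂((volume : Measure ℝ).restrict (Ico a b)), ‖h s‖ ≤ M)
    (hu : u ∈ Icc a b) (hv : v ∈ Icc a b) : ‖∫ s in u..v, h s‖ ≤ M * |v - u| := by
  refine intervalIntegral.norm_integral_le_of_norm_le_const_ae ?_
  have hne : ∀ᵐ s : ℝ, s ≠ b := by simp [ae_iff, measure_singleton]
  rw [ae_restrict_iff' measurableSet_Ico] at hM
  filter_upwards [hM, hne] with s hs hsb hs'
  have h1 : s ∈ Icc a b := uIcc_subset_Icc hu hv (uIoc_subset_uIcc hs')
  exact hs ⟨h1.1, lt_of_le_of_ne h1.2 hsb⟩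

lemma IntSol.lipschitz (hT : IsClosed T) (hf : DeltaCaratheodory T Ω f) (hI : HInfty T Ω f)
    {q : ℝ → EuclideanSpace ℝ (Fin n)} {a b : ℝ} (hab : a < b) (ha : a ∈ T) (hb : b ∈ T)
    (h : IntSol T Ω f q a b) :
    ∃ M : ℝ, 0 ≤ M ∧ ∀ u ∈ Icc a b ∩ T, ∀ v ∈ Icc a b ∩ T, ‖q v - q u‖ ≤ M * |v - u| := by
  obtain ⟨M, hM, h1, -⟩ := rhs_bound hT hf hI hab ha hb (h.continuousOn hab.le ha) h.mem
  exact ⟨M, hM, fun u hu v hv => by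
    rw [h.eq u hu v hv]; exact norm_integral_le_of_bound h1 hu.1 hv.1⟩

end IntegralForm

/-! ### Local existence and uniqueness, and the step across a gap -/

section LocalTheory

variable {n : ℕ} {T : Set ℝ} {Ω : Set (EuclideanSpace ℝ (Fin n))}
  {f : EuclideanSpace ℝ (Fin n) → ℝ → EuclideanSpace ℝ (Fin n)}

lemma rhs_diff_bound (hT : IsClosed T) {a b L D : ℝ} (ha : a ∈ T) (hb : b ∈ T)
    {B : Set (EuclideanSpace ℝ (Fin n))} (hL0 : 0 ≤ L)
    (hL : ∀ᵐ t ∂((deltaMeasure T).restrict (Ico a b ∩ T)),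
      ∀ x₁ ∈ B, ∀ x₂ ∈ B, ‖f x₁ t - f x₂ t‖ ≤ L * ‖x₁ - x₂‖)
    {p q : ℝ → EuclideanSpace ℝ (Fin n)} (hp : ∀ t ∈ Icc a b ∩ T, p t ∈ B)
    (hq : ∀ t ∈ Icc a b ∩ T, q t ∈ B) (hD : ∀ t ∈ Icc a b ∩ T, ‖p t - q t‖ ≤ D) :
    ∀ᵐ s ∂((volume : Measure ℝ).restrict (Ico a b)), ‖rhs T f p s - rhs T f q s‖ ≤ L * D := by
  have h := ae_pull hT ha hb (measurableSet_Ico.inter hT.measurableSet) subset_rfl hL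
  filter_upwards [h, ae_restrict_mem measurableSet_Ico] with s hs hsI
  have hm := sigma_floor_mem hT ha hb hsI
  exact (hs _ (hp _ hm) _ (hq _ hm)).trans (mul_le_mul_of_nonneg_left (hD _ hm) hL0)

/-- Local existence by the contraction principle, on a short interval containing the base point
`e`: the Picard operator `u ↦ (t ↦ x + ∫ s in e..t, rhs T f u s)` acts on the continuous functions
from `[a,b]` to a closed ball. -/
lemma exists_local (hT : IsClosed T) (hf : DeltaCaratheodory T Ω f) {a b e L M R : ℝ}
    (ha : a ∈ T) (hb : b ∈ T) (he : e ∈ Icc a b ∩ T) {x : EuclideanSpace ℝ (Fin n)}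
    (hR : 0 ≤ R) (hB : Metric.closedBall x R ⊆ Ω) (hM0 : 0 ≤ M) (hL0 : 0 ≤ L)
    (hM : ∀ᵐ t ∂((deltaMeasure T).restrict (Ico a b ∩ T)),
      ∀ y ∈ Metric.closedBall x R, ‖f y t‖ ≤ M)
    (hL : ∀ᵐ t ∂((deltaMeasure T).restrict (Ico a b ∩ T)),
      ∀ x₁ ∈ Metric.closedBall x R, ∀ x₂ ∈ Metric.closedBall x R,
        ‖f x₁ t - f x₂ t‖ ≤ L * ‖x₁ - x₂‖)
    (h1 : M * (b - a) ≤ R) (h2 : L * (b - a) ≤ 1 / 2) :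
    ∃ p, IntSol T Ω f p a b ∧ p e = x := by
  have hab : a ≤ b := he.1.1.trans he.1.2
  have hlen : ∀ t ∈ Icc a b, |t - e| ≤ b - a := fun t ht => by
    rw [abs_le]; constructor <;> linarith [ht.1, ht.2, he.1.1, he.1.2]
  let ext : C(Icc a b, Metric.closedBall x R) → ℝ → EuclideanSpace ℝ (Fin n) :=
    fun u s => (u (projIcc a b hab s) : EuclideanSpace ℝ (Fin n))
  have hextc : ∀ u, Continuous (ext u) := fun u =>
    continuous_subtype_val.comp (u.continuous.comp continuous_projIcc)
  have hextm : ∀ u t, ext u t ∈ Metric.closedBall x R := fun u t => (u _).2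
  have hext : ∀ u (t : Icc a b), ext u t = u t := fun u t => by
    simp only [ext, projIcc_val]
  have hint : ∀ u, (∀ᵐ s ∂((volume : Measure ℝ).restrict (Ico a b)), ‖rhs T f (ext u) s‖ ≤ M) ∧
      IntervalIntegrable (rhs T f (ext u)) volume a b := fun u =>
    rhs_integrable hT hf hab ha hb (hextc u).continuousOn (fun t _ => hB (hextm u t))
      (hM.mono fun t ht y hy => by
        obtain ⟨s, -, rfl⟩ := hy
        exact ht _ (hextm u s))
  have hmaps : ∀ u, ∀ t ∈ Icc a b, x + (∫ s in e..t, rhs T f (ext u) s) ∈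
      Metric.closedBall x R := by
    intro u t ht
    rw [mem_closedBall_iff_norm, add_sub_cancel_left]
    refine (norm_integral_le_of_bound (hint u).1 he.1 ht).trans (le_trans ?_ h1)
    exact mul_le_mul_of_nonneg_left (hlen t ht) hM0
  have hKc : ∀ u, Continuous fun t : Icc a b => x + ∫ s in e..(t:ℝ), rhs T f (ext u) s := by
    intro u
    have hc := intervalIntegral.continuousOn_primitive_interval' (hint u).2
      (by rw [uIcc_of_le hab]; exact he.1)
    rw [uIcc_of_le hab] at hc
    exact continuous_const.add (continuousOn_iff_continuous_domRestrict.1 hc)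
  let K : C(Icc a b, Metric.closedBall x R) → C(Icc a b, Metric.closedBall x R) := fun u =>
    ⟨fun t => ⟨x + ∫ s in e..(t:ℝ), rhs T f (ext u) s, hmaps u t t.2⟩, (hKc u).subtype_mk _⟩
  have hK : ContractingWith (1 / 2 : NNReal) K := by
    refine ⟨by rw [← NNReal.coe_lt_coe]; norm_num, LipschitzWith.of_dist_le_mul fun u v => ?_⟩
    rw [ContinuousMap.dist_le (by positivity)]
    intro t
    have hd := rhs_diff_bound hT ha hb (D := dist u v) hL0 hL (fun s _ => hextm u s)
      (fun s _ => hextm v s) (fun s _ => by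
        rw [← dist_eq_norm]; exact ContinuousMap.dist_apply_le_dist (f := u) (g := v) _)
    have he' : dist (K u t) (K v t) =
        ‖∫ s in e..(t:ℝ), (rhs T f (ext u) s - rhs T f (ext v) s)‖ := by
      rw [intervalIntegral.integral_sub (intInt_sub (hint u).2 he.1 t.2)
        (intInt_sub (hint v).2 he.1 t.2), Subtype.dist_eq, dist_eq_norm]
      congr 1
      exact add_sub_add_left_eq_sub _ _ _
    rw [he']
    refine (norm_integral_le_of_bound hd he.1 t.2).trans ?_
    have h3 := hlen t t.2
    have h4 : L * |(t:ℝ) - e| ≤ 1 / 2 := (mul_le_mul_of_nonneg_left h3 hL0).trans h2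
    calc L * dist u v * |(t:ℝ) - e| = L * |(t:ℝ) - e| * dist u v := by ring
      _ ≤ 1 / 2 * dist u v := mul_le_mul_of_nonneg_right h4 dist_nonneg
      _ = _ := by norm_num
  have : Nonempty (C(Icc a b, Metric.closedBall x R)) :=
    ⟨ContinuousMap.const _ ⟨x, Metric.mem_closedBall_self hR⟩⟩
  have : CompleteSpace (Metric.closedBall x R) := Metric.isClosed_closedBall.completeSpace_coe
  set u := ContractingWith.fixedPoint K hK with hu
  have hfix : K u = u := hK.fixedPoint_isFixedPt
  have hval : ∀ t ∈ Icc a b, ext u t = x + ∫ s in e..t, rhs T f (ext u) s := by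
    intro t ht
    have h3 : (K u ⟨t, ht⟩ : EuclideanSpace ℝ (Fin n)) = u ⟨t, ht⟩ := by rw [hfix]
    rw [hext u ⟨t, ht⟩, ← h3]
    rfl
  have hxe : ext u e = x := by rw [hval e he.1]; simp
  refine ⟨ext u, IntSol.of_base he.1 (fun t _ => hB (hextm u t)) (hint u).2 fun t ht => ?_, hxe⟩
  rw [hxe]; exact hval t ht.1

/-- Local uniqueness: on a short interval the maximal distance `D` between two solutions agreeing
at `e` satisfies `D ≤ D / 2`. -/
lemma unique_local (hT : IsClosed T) {c d e L : ℝ} (hc : c ∈ T) (hd : d ∈ T)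
    (he : e ∈ Icc c d ∩ T) {B : Set (EuclideanSpace ℝ (Fin n))} (hL0 : 0 ≤ L)
    (hL : ∀ᵐ t ∂((deltaMeasure T).restrict (Ico c d ∩ T)),
      ∀ x₁ ∈ B, ∀ x₂ ∈ B, ‖f x₁ t - f x₂ t‖ ≤ L * ‖x₁ - x₂‖)
    (h2 : L * (d - c) ≤ 1 / 2) {p q : ℝ → EuclideanSpace ℝ (Fin n)}
    (hp : IntSol T Ω f p c d) (hq : IntSol T Ω f q c d) (hpq : p e = q e)
    (hpB : ∀ t ∈ Icc c d ∩ T, p t ∈ B) (hqB : ∀ t ∈ Icc c d ∩ T, q t ∈ B) :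
    EqOn p q (Icc c d ∩ T) := by
  have hcd : c ≤ d := he.1.1.trans he.1.2
  have hcont : ContinuousOn (fun t => ‖p t - q t‖) (Icc c d ∩ T) :=
    ((hp.continuousOn hcd hc).sub (hq.continuousOn hcd hc)).norm
  obtain ⟨m, hm, hmax⟩ := (isCompact_Icc.inter_right hT).exists_isMaxOn ⟨e, he⟩ hcont
  have hbd := rhs_diff_bound hT hc hd (D := ‖p m - q m‖) hL0 hL hpB hqB fun t ht => hmax ht
  have heq : p m - q m = ∫ s in e..m, (rhs T f p s - rhs T f q s) := by
    rw [intervalIntegral.integral_sub (intInt_sub hp.int he.1 hm.1) (intInt_sub hq.int he.1 hm.1),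
      ← hp.eq e he m hm, ← hq.eq e he m hm, hpq]
    abel
  have hle : ‖p m - q m‖ ≤ L * ‖p m - q m‖ * |m - e| := by
    conv_lhs => rw [heq]
    exact norm_integral_le_of_bound hbd he.1 hm.1
  have h3 : |m - e| ≤ d - c := by
    rw [abs_le]; constructor <;> linarith [hm.1.1, hm.1.2, he.1.1, he.1.2]
  have h4 : L * |m - e| ≤ 1 / 2 := (mul_le_mul_of_nonneg_left h3 hL0).trans h2
  have h5 : ‖p m - q m‖ ≤ 0 := by nlinarith [norm_nonneg (p m - q m)]
  intro t ht
  have h6 : ‖p t - q t‖ ≤ ‖p m - q m‖ := hmax ht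
  exact sub_eq_zero.1 (norm_le_zero_iff.1 (h6.trans h5))

lemma rhs_gap {q : ℝ → EuclideanSpace ℝ (Fin n)} {r s : ℝ} (hr : r ∈ T)
    (hs : s ∈ Ico r (tsSigma T r)) : rhs T f q s = f (q (tsSigma T r)) r := by
  unfold rhs
  rw [floor_of_gap hr hs.1 hs.2]

lemma integral_gap {q : ℝ → EuclideanSpace ℝ (Fin n)} {r : ℝ} (hr : r ∈ T) :
    IntervalIntegrable (rhs T f q) volume r (tsSigma T r) ∧
      ∫ s in r..tsSigma T r, rhs T f q s = tsGrain T r • f (q (tsSigma T r)) r := by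
  have hle := le_sigma (T := T) r
  have hc : ∀ᵐ s ∂((volume : Measure ℝ).restrict (Ioc r (tsSigma T r))),
      f (q (tsSigma T r)) r = rhs T f q s := by
    rw [ae_Ioc_iff_Ico, ae_restrict_iff' measurableSet_Ico]
    exact Eventually.of_forall fun s hs => (rhs_gap hr hs).symm
  constructor
  · exact (intervalIntegrable_const (c := f (q (tsSigma T r)) r)).congr_ae
      (by rw [uIoc_of_le hle]; exact hc)
  · rw [intervalIntegral.integral_of_le hle, ← integral_congr_ae hc,
      ← intervalIntegral.integral_of_le hle, intervalIntegral.integral_const]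
    rfl

lemma mem_gap {r t : ℝ} (ht : t ∈ Icc r (tsSigma T r) ∩ T) : t = r ∨ t = tsSigma T r := by
  rcases eq_or_lt_of_le ht.1.1 with h | h
  · exact Or.inl h.symm
  · exact Or.inr (le_antisymm ht.1.2 (sigma_le ht.2 h))

/-- Across a gap the integral equation is the implicit step `y = x + μ(r) f(y, r)`. -/
lemma exists_gap {r : ℝ} (hr : r ∈ T) (hrs : RightScattered T r) {x y : EuclideanSpace ℝ (Fin n)}
    (hx : x ∈ Ω) (hy : y ∈ Ω) (h : y - tsGrain T r • f y r = x) :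
    ∃ p, IntSol T Ω f p r (tsSigma T r) ∧ p r = x ∧ p (tsSigma T r) = y := by
  have hrs' : r < tsSigma T r := hrs
  let p : ℝ → EuclideanSpace ℝ (Fin n) := fun s => if s ≤ r then x else y
  have h1 : p r = x := by simp [p]
  have h2 : p (tsSigma T r) = y := by simp [p, hrs']
  refine ⟨p, IntSol.of_base (e := r) ⟨le_rfl, hrs'.le⟩ ?_ (integral_gap hr).1 ?_, h1, h2⟩
  · intro t ht
    rcases mem_gap ht with rfl | rfl
    · rwa [h1]
    · rwa [h2]
  · intro t ht
    rcases mem_gap ht with rfl | rfl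
    · simp
    · rw [(integral_gap hr).2, h1, h2, ← h]; abel

lemma IntSol.gap (hT : IsClosed T) {q : ℝ → EuclideanSpace ℝ (Fin n)} {a b r : ℝ} (hb : b ∈ T)
    (h : IntSol T Ω f q a b) (hr : r ∈ Ico a b ∩ T) :
    q r = q (tsSigma T r) - tsGrain T r • f (q (tsSigma T r)) r := by
  have hs := sigma_mem_Icc hT hb hr
  have h1 := h.eq r ⟨⟨hr.1.1, hr.1.2.le⟩, hr.2⟩ _ hs
  rw [(integral_gap hr.2).2] at h1
  rw [← h1]; abel

end LocalTheory

/-! ### Extension steps and global uniqueness -/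

section Steps

variable {n : ℕ} {T : Set ℝ} {Ω : Set (EuclideanSpace ℝ (Fin n))}
  {f : EuclideanSpace ℝ (Fin n) → ℝ → EuclideanSpace ℝ (Fin n)}

lemma ae_mono_interval {P : ℝ → Prop} {a b c d : ℝ} (hac : a ≤ c) (hdb : d ≤ b)
    (h : ∀ᵐ t ∂((deltaMeasure T).restrict (Ico a b ∩ T)), P t) :
    ∀ᵐ t ∂((deltaMeasure T).restrict (Ico c d ∩ T)), P t :=
  ae_restrict_of_ae_restrict_of_subset
    (inter_subset_inter_left _ (Ico_subset_Ico hac hdb)) h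

/-- On sufficiently short subintervals the quantitative hypotheses of `exists_local` hold. -/
lemma short (hI : HInfty T Ω f) {c d R L : ℝ} (hc : c ∈ T) (hd : d ∈ T) (hcd : c < d)
    {x : EuclideanSpace ℝ (Fin n)} (hR : 0 < R) (hB : Metric.closedBall x R ⊆ Ω) (hL0 : 0 ≤ L) :
    ∃ M η : ℝ, 0 ≤ M ∧ 0 < η ∧
      (∀ᵐ t ∂((deltaMeasure T).restrict (Ico c d ∩ T)),
        ∀ y ∈ Metric.closedBall x R, ‖f y t‖ ≤ M) ∧
      ∀ l, l < η → M * l ≤ R ∧ L * l ≤ 1 / 2 := by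
  obtain ⟨M, hM0, hM⟩ := hI _ hB (isCompact_closedBall x R) c hc d hd hcd
  refine ⟨M, min (R / (M + 1)) (1 / (2 * (L + 1))), hM0, by positivity, hM, fun l hl => ?_⟩
  have h1 := hl.trans_le (min_le_left _ _)
  have h2 := hl.trans_le (min_le_right _ _)
  rw [lt_div_iff₀ (by positivity)] at h1 h2
  rcases le_total l 0 with h | h
  · exact ⟨by nlinarith, by nlinarith⟩
  · exact ⟨by nlinarith, by nlinarith⟩

lemma exists_gt {t : ℝ} (ht : t ∈ T) (h : ¬ IsGreatest T t) : ∃ b ∈ T, t < b := by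
  by_contra! hc
  exact h ⟨ht, fun b hb => hc b hb⟩

lemma exists_lt' {t : ℝ} (ht : t ∈ T) (h : ¬ IsLeast T t) : ∃ b ∈ T, b < t := by
  by_contra! hc
  exact h ⟨ht, fun b hb => hc b hb⟩

/-- A solution can always be started to the right: by local existence at a right-dense point, by
surjectivity of `G⁻(t)` at a right-scattered one. -/
lemma step_right (hT : IsClosed T) (hf : DeltaCaratheodory T Ω f) (hI : HInfty T Ω f)
    (hrd : HrdLocLip T Ω f) (hreg : HforwRegr T Ω f) {t : ℝ} (ht : t ∈ T)
    (hng : ¬ IsGreatest T t) {x : EuclideanSpace ℝ (Fin n)} (hx : x ∈ Ω) :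
    ∃ d ∈ T, t < d ∧ ∃ p, IntSol T Ω f p t d ∧ p t = x := by
  rcases rd_or_rs (T := T) t with hd | hs
  · obtain ⟨R, hR, δ, hδ, L, hL0, hB, htδ, hL⟩ := hrd x hx t ht hng hd
    obtain ⟨M, η, hM0, hη, hM, hs⟩ := short hI ht htδ (by linarith) hR hB hL0
    obtain ⟨c, hc, htc, hcη⟩ := exists_right htδ (by linarith) hd
      (show t < min (t + δ) (t + η) by rw [lt_min_iff]; constructor <;> linarith)
    have h1 := hcη.trans_le (min_le_left _ _)
    have h2 := hcη.trans_le (min_le_right _ _)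
    have h3 := hs (c - t) (by linarith)
    exact ⟨c, hc, htc, exists_local hT hf ht hc ⟨⟨le_rfl, htc.le⟩, ht⟩ hR.le hB hM0 hL0
      (ae_mono_interval le_rfl h1.le hM) (ae_mono_interval le_rfl h1.le hL) h3.1 h3.2⟩
  · obtain ⟨y, hy, hyx⟩ := (hreg t ht hs).surjOn (mem_univ x)
    obtain ⟨p, hp, hp1, -⟩ := exists_gap ht hs hx hy hyx
    exact ⟨_, sigma_mem hT ht, hs, p, hp, hp1⟩

/-- A solution can always be started to the left: by local existence at a left-dense point, by
stability of `Ω` under `G⁻(ρ(t))` at a left-scattered one. -/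
lemma step_left (hT : IsClosed T) (hf : DeltaCaratheodory T Ω f) (hI : HInfty T Ω f)
    (hld : HldLocLip T Ω f) (hst : HbackStab T Ω f) {t : ℝ} (ht : t ∈ T)
    (hnl : ¬ IsLeast T t) {x : EuclideanSpace ℝ (Fin n)} (hx : x ∈ Ω) :
    ∃ c ∈ T, c < t ∧ ∃ p, IntSol T Ω f p c t ∧ p t = x := by
  rcases eq_or_lt_of_le (rho_le (T := T) t) with hd | hs
  · obtain ⟨R, hR, δ, hδ, L, hL0, hB, htδ, hL⟩ := hld x hx t ht hnl hd
    obtain ⟨M, η, hM0, hη, hM, hs⟩ := short hI htδ ht (by linarith) hR hB hL0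
    obtain ⟨c, hc, hcη, htc⟩ := exists_left htδ (by linarith) hd
      (show max (t - δ) (t - η) < t by rw [max_lt_iff]; constructor <;> linarith)
    have h1 := (le_max_left _ _).trans_lt hcη
    have h2 := (le_max_right _ _).trans_lt hcη
    have h3 := hs (t - c) (by linarith)
    exact ⟨c, hc, htc, exists_local hT hf hc ht ⟨⟨htc.le, le_rfl⟩, ht⟩ hR.le hB hM0 hL0
      (ae_mono_interval h1.le le_rfl hM) (ae_mono_interval h1.le le_rfl hL) h3.1 h3.2⟩
  · have hσ := sigma_rho hT ht hs
    have hr := rho_mem hT ht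
    have hrs : RightScattered T (tsRho T t) := by
      unfold RightScattered; rw [hσ]; exact hs
    obtain ⟨p, hp, -, hp2⟩ := exists_gap hr hrs (hst _ hr hrs x hx) hx rfl
    rw [hσ] at hp hp2
    exact ⟨_, hr, hs, p, hp, hp2⟩

lemma near_ball {K : Set ℝ} {p : ℝ → EuclideanSpace ℝ (Fin n)} (hp : ContinuousOn p K) {t : ℝ}
    (ht : t ∈ K) {R : ℝ} (hR : 0 < R) :
    ∃ η > 0, ∀ s ∈ K, |s - t| < η → p s ∈ Metric.closedBall (p t) R := by
  obtain ⟨η, hη, h⟩ := Metric.continuousOn_iff.1 hp t ht R hR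
  exact ⟨η, hη, fun s hs hd => Metric.ball_subset_closedBall (h s hs hd)⟩

lemma unique_step_right (hT : IsClosed T) (hI : HInfty T Ω f)
    (hrd : HrdLocLip T Ω f) (hreg : HforwRegr T Ω f) {t b : ℝ} (ht : t ∈ T) (hb : b ∈ T)
    (htb : t < b) {p q : ℝ → EuclideanSpace ℝ (Fin n)} (hp : IntSol T Ω f p t b)
    (hq : IntSol T Ω f q t b) (hpq : p t = q t) :
    ∃ d ∈ T, t < d ∧ d ≤ b ∧ EqOn p q (Icc t d ∩ T) := by
  rcases rd_or_rs (T := T) t with hd | hs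
  · have htK : t ∈ Icc t b ∩ T := ⟨⟨le_rfl, htb.le⟩, ht⟩
    obtain ⟨R, hR, δ, hδ, L, hL0, hB, htδ, hL⟩ := hrd (p t) (hp.mem t htK) t ht
      (fun h => not_le.2 htb (h.2 hb)) hd
    obtain ⟨M, η, -, hη, -, hs⟩ := short hI ht htδ (by linarith) hR hB hL0
    obtain ⟨η₁, hη₁, hp1⟩ := near_ball (hp.continuousOn htb.le ht) htK hR
    obtain ⟨η₂, hη₂, hq1⟩ := near_ball (hq.continuousOn htb.le ht) htK hR
    obtain ⟨c, hc, htc, hcη⟩ := exists_right hb htb hd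
      (show t < min (min b (t + δ)) (min (t + η) (min (t + η₁) (t + η₂))) by
        simp only [lt_min_iff]; refine ⟨⟨htb, ?_⟩, ?_, ?_, ?_⟩ <;> linarith)
    simp only [lt_min_iff] at hcη
    obtain ⟨⟨h1, h2⟩, h3, h4, h5⟩ := hcη
    refine ⟨c, hc, htc, h1.le, unique_local hT ht hc ⟨⟨le_rfl, htc.le⟩, ht⟩ hL0
      (ae_mono_interval le_rfl h2.le hL) (hs (c - t) (by linarith)).2
      (hp.mono le_rfl htc.le h1.le) (hq.mono le_rfl htc.le h1.le) hpq ?_ ?_⟩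
    · intro s hs
      exact hp1 s ⟨⟨hs.1.1, hs.1.2.trans h1.le⟩, hs.2⟩
        (by rw [abs_of_nonneg (by linarith [hs.1.1])]; linarith [hs.1.2])
    · intro s hs
      rw [hpq]
      exact hq1 s ⟨⟨hs.1.1, hs.1.2.trans h1.le⟩, hs.2⟩
        (by rw [abs_of_nonneg (by linarith [hs.1.1])]; linarith [hs.1.2])
  · have htI : t ∈ Ico t b ∩ T := ⟨⟨le_rfl, htb⟩, ht⟩
    have hσ := sigma_mem_Icc hT hb htI
    have he : p (tsSigma T t) = q (tsSigma T t) := by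
      refine (hreg t ht hs).injOn (hp.mem _ hσ) (hq.mem _ hσ) ?_
      have h1 := hp.gap hT hb htI
      have h2 := hq.gap hT hb htI
      change p (tsSigma T t) - _ = q (tsSigma T t) - _
      rw [← h1, ← h2, hpq]
    refine ⟨_, hσ.2, hs, hσ.1.2, fun s hs => ?_⟩
    rcases mem_gap hs with rfl | rfl
    · exact hpq
    · exact he

lemma unique_step_left (hT : IsClosed T) (hI : HInfty T Ω f)
    (hld : HldLocLip T Ω f) {a t : ℝ} (ha : a ∈ T) (ht : t ∈ T)
    (hat : a < t) {p q : ℝ → EuclideanSpace ℝ (Fin n)} (hp : IntSol T Ω f p a t)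
    (hq : IntSol T Ω f q a t) (hpq : p t = q t) :
    ∃ c ∈ T, c < t ∧ a ≤ c ∧ EqOn p q (Icc c t ∩ T) := by
  rcases eq_or_lt_of_le (rho_le (T := T) t) with hd | hs
  · have htK : t ∈ Icc a t ∩ T := ⟨⟨hat.le, le_rfl⟩, ht⟩
    obtain ⟨R, hR, δ, hδ, L, hL0, hB, htδ, hL⟩ := hld (p t) (hp.mem t htK) t ht
      (fun h => not_le.2 hat (h.2 ha)) hd
    obtain ⟨M, η, -, hη, -, hs⟩ := short hI htδ ht (by linarith) hR hB hL0
    obtain ⟨η₁, hη₁, hp1⟩ := near_ball (hp.continuousOn hat.le ha) htK hR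
    obtain ⟨η₂, hη₂, hq1⟩ := near_ball (hq.continuousOn hat.le ha) htK hR
    obtain ⟨c, hc, hcη, htc⟩ := exists_left ha hat hd
      (show max (max a (t - δ)) (max (t - η) (max (t - η₁) (t - η₂))) < t by
        simp only [max_lt_iff]; refine ⟨⟨hat, ?_⟩, ?_, ?_, ?_⟩ <;> linarith)
    simp only [max_lt_iff] at hcη
    obtain ⟨⟨h1, h2⟩, h3, h4, h5⟩ := hcη
    refine ⟨c, hc, htc, h1.le, unique_local hT hc ht ⟨⟨htc.le, le_rfl⟩, ht⟩ hL0
      (ae_mono_interval h2.le le_rfl hL) (hs (t - c) (by linarith)).2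
      (hp.mono h1.le htc.le le_rfl) (hq.mono h1.le htc.le le_rfl) hpq ?_ ?_⟩
    · intro s hs
      exact hp1 s ⟨⟨h1.le.trans hs.1.1, hs.1.2⟩, hs.2⟩
        (by rw [abs_of_nonpos (by linarith [hs.1.2])]; linarith [hs.1.1])
    · intro s hs
      rw [hpq]
      exact hq1 s ⟨⟨h1.le.trans hs.1.1, hs.1.2⟩, hs.2⟩
        (by rw [abs_of_nonpos (by linarith [hs.1.2])]; linarith [hs.1.1])
  · have hσ := sigma_rho hT ht hs
    have hr := rho_mem hT ht
    have har := le_rho ha hat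
    have hrI : tsRho T t ∈ Ico a t ∩ T := ⟨⟨har, hs⟩, hr⟩
    refine ⟨_, hr, hs, har, fun s hs => ?_⟩
    rcases mem_gap (T := T) (r := tsRho T t) (by rw [hσ]; exact hs) with h | h
    · rw [h, hp.gap hT ht hrI, hq.gap hT ht hrI, hσ, hpq]
    · rw [h, hσ, hpq]

lemma isClosed_eq_set (hT : IsClosed T) {p q : ℝ → EuclideanSpace ℝ (Fin n)} {a b : ℝ}
    (hab : a ≤ b) (ha : a ∈ T) (hp : IntSol T Ω f p a b) (hq : IntSol T Ω f q a b) :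
    IsClosed {s | s ∈ Icc a b ∩ T ∧ p s = q s} := by
  have := ((hp.continuousOn hab ha).sub (hq.continuousOn hab ha)).preimage_isClosed_of_isClosed
    (isClosed_Icc.inter hT) (isClosed_singleton (x := (0 : EuclideanSpace ℝ (Fin n))))
  convert this using 1
  ext s
  exact and_congr Iff.rfl sub_eq_zero.symm

lemma unique_right (hT : IsClosed T) (hI : HInfty T Ω f)
    (hrd : HrdLocLip T Ω f) (hreg : HforwRegr T Ω f) {t b : ℝ} (ht : t ∈ T) (hb : b ∈ T)
    (htb : t ≤ b) {p q : ℝ → EuclideanSpace ℝ (Fin n)} (hp : IntSol T Ω f p t b)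
    (hq : IntSol T Ω f q t b) (hpq : p t = q t) : EqOn p q (Icc t b ∩ T) := by
  have hE := isClosed_eq_set hT htb ht hp hq
  set S := {s | s ∈ Icc t b ∩ T ∧ EqOn p q (Icc t s ∩ T)} with hS
  have htS : t ∈ S := by
    refine ⟨⟨⟨le_rfl, htb⟩, ht⟩, fun s hs => ?_⟩
    rwa [le_antisymm hs.1.2 hs.1.1]
  have hbdd : BddAbove S := ⟨b, fun s hs => hs.1.1.2⟩
  have hm : sSup S ∈ Icc t b ∩ T ∧ p (sSup S) = q (sSup S) :=
    hE.closure_subset_iff.2 (fun s hs => ⟨hs.1, hs.2 ⟨⟨hs.1.1.1, le_rfl⟩, hs.1.2⟩⟩)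
      (csSup_mem_closure ⟨t, htS⟩ hbdd)
  have hmS : sSup S ∈ S := by
    refine ⟨hm.1, fun s hs => ?_⟩
    rcases eq_or_lt_of_le hs.1.2 with h | h
    · rw [h]; exact hm.2
    · obtain ⟨s', hs', hlt⟩ := exists_lt_of_lt_csSup ⟨t, htS⟩ h
      exact hs'.2 ⟨⟨hs.1.1, hlt.le⟩, hs.2⟩
  rcases eq_or_lt_of_le hm.1.1.2 with h | h
  · rw [h] at hmS; exact hmS.2
  · obtain ⟨d, hd, hmd, hdb, heq⟩ := unique_step_right hT hI hrd hreg hm.1.2 hb h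
      (hp.mono hm.1.1.1 h.le le_rfl) (hq.mono hm.1.1.1 h.le le_rfl) hm.2
    have hdS : d ∈ S := by
      refine ⟨⟨⟨hm.1.1.1.trans hmd.le, hdb⟩, hd⟩, fun s hs => ?_⟩
      rcases le_total s (sSup S) with h' | h'
      · exact hmS.2 ⟨⟨hs.1.1, h'⟩, hs.2⟩
      · exact heq ⟨⟨h', hs.1.2⟩, hs.2⟩
    exact absurd (le_csSup hbdd hdS) (not_le.2 hmd)

lemma unique_left (hT : IsClosed T) (hI : HInfty T Ω f)
    (hld : HldLocLip T Ω f) {a t : ℝ} (ha : a ∈ T) (ht : t ∈ T)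
    (hat : a ≤ t) {p q : ℝ → EuclideanSpace ℝ (Fin n)} (hp : IntSol T Ω f p a t)
    (hq : IntSol T Ω f q a t) (hpq : p t = q t) : EqOn p q (Icc a t ∩ T) := by
  have hE := isClosed_eq_set hT hat ha hp hq
  set S := {s | s ∈ Icc a t ∩ T ∧ EqOn p q (Icc s t ∩ T)} with hS
  have htS : t ∈ S := by
    refine ⟨⟨⟨hat, le_rfl⟩, ht⟩, fun s hs => ?_⟩
    rwa [le_antisymm hs.1.2 hs.1.1]
  have hbdd : BddBelow S := ⟨a, fun s hs => hs.1.1.1⟩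
  have hm : sInf S ∈ Icc a t ∩ T ∧ p (sInf S) = q (sInf S) :=
    hE.closure_subset_iff.2 (fun s hs => ⟨hs.1, hs.2 ⟨⟨le_rfl, hs.1.1.2⟩, hs.1.2⟩⟩)
      (csInf_mem_closure ⟨t, htS⟩ hbdd)
  have hmS : sInf S ∈ S := by
    refine ⟨hm.1, fun s hs => ?_⟩
    rcases eq_or_lt_of_le hs.1.1 with h | h
    · rw [← h]; exact hm.2
    · obtain ⟨s', hs', hlt⟩ := exists_lt_of_csInf_lt ⟨t, htS⟩ h
      exact hs'.2 ⟨⟨hlt.le, hs.1.2⟩, hs.2⟩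
  rcases eq_or_lt_of_le hm.1.1.1 with h | h
  · rw [← h] at hmS; exact hmS.2
  · obtain ⟨c, hc, hcm, hac, heq⟩ := unique_step_left hT hI hld ha hm.1.2 h
      (hp.mono le_rfl h.le hm.1.1.2) (hq.mono le_rfl h.le hm.1.1.2) hm.2
    have hcS : c ∈ S := by
      refine ⟨⟨⟨hac, hcm.le.trans hm.1.1.2⟩, hc⟩, fun s hs => ?_⟩
      rcases le_total s (sInf S) with h' | h'
      · exact heq ⟨⟨hs.1.1, h'⟩, hs.2⟩
      · exact hmS.2 ⟨⟨h', hs.1.2⟩, hs.2⟩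
    exact absurd (csInf_le hbdd hcS) (not_le.2 hcm)

end Steps

/-! ### Equivalence of the two notions of solution -/

section Equivalence

variable {n : ℕ} {T : Set ℝ} {Ω : Set (EuclideanSpace ℝ (Fin n))}
  {f : EuclideanSpace ℝ (Fin n) → ℝ → EuclideanSpace ℝ (Fin n)}

lemma HasDeltaDerivAt.scattered {q : ℝ → EuclideanSpace ℝ (Fin n)}
    {q' : EuclideanSpace ℝ (Fin n)} {t : ℝ} (ht : t ∈ T) (h : HasDeltaDerivAt T q q' t) :
    q (tsSigma T t) - q t = tsGrain T t • q' := by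
  rw [← sub_eq_zero, ← norm_le_zero_iff]
  refine le_of_forall_pos_le_add fun ε hε => ?_
  have h0 : 0 ≤ |tsSigma T t - t| := abs_nonneg _
  obtain ⟨U, hU, H⟩ := h (ε / (|tsSigma T t - t| + 1)) (by positivity)
  refine (H t ⟨mem_of_mem_nhds hU, ht⟩).trans ?_
  rw [zero_add, div_mul_eq_mul_div, div_le_iff₀ (by positivity)]
  nlinarith

/-- Lebesgue differentiation at almost every point of `T`; almost every point of `T` is
right-dense, the right-scattered ones being countably many. -/
lemma ae_deriv_integral {q : ℝ → EuclideanSpace ℝ (Fin n)} {a b : ℝ} (hab : a ≤ b)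
    (h : IntervalIntegrable (rhs T f q) volume a b) :
    ∀ᵐ t : ℝ, t ∈ T → t ∈ Icc a b → tsSigma T t = t ∧
      HasDerivAt (fun x => ∫ s in a..x, rhs T f q s) (f (q t) t) t := by
  have h1 : ∀ᵐ t : ℝ, ¬ (t ∈ T ∧ RightScattered T t) := (countable_rs T).ae_notMem volume
  filter_upwards [h.ae_hasDerivAt_integral, h1] with t ht hrs htT htI
  have hσ : tsSigma T t = t := by
    rcases rd_or_rs (T := T) t with h | h
    · exact h
    · exact absurd ⟨htT, h⟩ hrs
  refine ⟨hσ, ?_⟩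
  have h2 := ht (by rwa [uIcc_of_le hab]) a left_mem_uIcc
  have h3 : rhs T f q t = f (q t) t := by
    unfold rhs; rw [floor_of_mem htT, hσ]
  rwa [h3] at h2

lemma deriv_eventually {F : ℝ → EuclideanSpace ℝ (Fin n)} {F' : EuclideanSpace ℝ (Fin n)} {t : ℝ}
    (h : HasDerivAt F F' t) {ε : ℝ} (hε : 0 < ε) :
    ∀ᶠ s in nhds t, ‖F s - F t - (s - t) • F'‖ ≤ ε * |s - t| := by
  rw [hasDerivAt_iff_isLittleO, Asymptotics.isLittleO_iff] at h
  exact h hε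

/-- Solutions in the sense of the Δ-derivative satisfy the integral equation: the difference `D`
of `q` and its integral is absolutely continuous with zero Δ-derivative. -/
lemma intSol_of_isSolIccS (hT : IsClosed T) (hf : DeltaCaratheodory T Ω f) (hI : HInfty T Ω f)
    {t₀ : ℝ} {q₀ : EuclideanSpace ℝ (Fin n)} {q : ℝ → EuclideanSpace ℝ (Fin n)} {a b : ℝ}
    (ha : a ∈ T) (hb : b ∈ T) (hab : a < b) (h : IsSolIccS T Ω f t₀ q₀ q a b) :
    IntSol T Ω f q a b := by
  obtain ⟨hm, hac, -, hder⟩ := h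
  rw [ae_delta_iff hT (measurableSet_Ico.inter hT.measurableSet)] at hder
  obtain ⟨M, hM0, hM, hint⟩ := rhs_bound hT hf hI hab ha hb hac.continuousOn hm
  set F : ℝ → EuclideanSpace ℝ (Fin n) := fun t => ∫ s in a..t, rhs T f q s with hF
  have haI : a ∈ Icc a b := ⟨le_rfl, hab.le⟩
  have hFd : ∀ u ∈ Icc a b, ∀ v ∈ Icc a b, F v - F u = ∫ s in u..v, rhs T f q s := fun u hu v hv =>
    intervalIntegral.integral_interval_sub_left (intInt_sub hint haI hv) (intInt_sub hint haI hu)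
  have hFl : ∀ u ∈ Icc a b, ∀ v ∈ Icc a b, ‖F v - F u‖ ≤ M * |v - u| := fun u hu v hv => by
    rw [hFd u hu v hv]; exact norm_integral_le_of_bound hM hu hv
  have hD : DeltaAC T a b (fun t => q t - F t) := by
    intro ε hε
    obtain ⟨δ, hδ, H⟩ := hac (ε / 2) (half_pos hε)
    refine ⟨min δ (ε / 2 / (M + 1)), by positivity, fun m u v hu hv huv hd hs => ?_⟩
    have h1 := H m u v hu hv huv hd (hs.trans_le (min_le_left _ _))
    have h2 := hs.trans_le (min_le_right _ _)
    rw [lt_div_iff₀ (by positivity)] at h2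
    have h3 : ∑ k ∈ Finset.range m, ‖F (v k) - F (u k)‖ ≤
        M * ∑ k ∈ Finset.range m, (v k - u k) := by
      rw [Finset.mul_sum]
      refine Finset.sum_le_sum fun k hk => ?_
      have hk := Finset.mem_range.1 hk
      have := hFl _ (hu k hk).1 _ (hv k hk).1
      rwa [abs_of_nonneg (sub_nonneg.2 (huv k hk))] at this
    have h4 : 0 ≤ ∑ k ∈ Finset.range m, (v k - u k) :=
      Finset.sum_nonneg fun k hk => sub_nonneg.2 (huv k (Finset.mem_range.1 hk))
    calc ∑ k ∈ Finset.range m, ‖q (v k) - F (v k) - (q (u k) - F (u k))‖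
        ≤ ∑ k ∈ Finset.range m, (‖q (v k) - q (u k)‖ + ‖F (v k) - F (u k)‖) := by
          refine Finset.sum_le_sum fun k _ => ?_
          rw [sub_sub_sub_comm]
          exact norm_sub_le _ _
      _ = ∑ k ∈ Finset.range m, ‖q (v k) - q (u k)‖ +
          ∑ k ∈ Finset.range m, ‖F (v k) - F (u k)‖ := Finset.sum_add_distrib
      _ < ε := by nlinarith
  have hconst := const_of_delta_deriv_zero hT hab.le ha hb hD (by
    intro r hr hrs
    have h1 := (hder.2 r hr.2 hrs hr).scattered hr.2
    have h2 := hFd r ⟨hr.1.1, hr.1.2.le⟩ _ (sigma_mem_Icc hT hb hr).1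
    rw [(integral_gap hr.2).2] at h2
    change q _ - F _ = q r - F r
    rw [sub_eq_sub_iff_sub_eq_sub, h1, h2]) (by
    filter_upwards [hder.1, ae_deriv_integral hab.le hint] with t h1 h2 htT htI ε hε
    obtain ⟨hσ, hF'⟩ := h2 htT ⟨htI.1.le, htI.2.le⟩
    obtain ⟨U, hU, H⟩ := h1 htT ⟨⟨htI.1.le, htI.2⟩, htT⟩ (ε / 2) (half_pos hε)
    filter_upwards [hU, deriv_eventually hF' (half_pos hε)] with s hs hs2 hsT
    have h3 := H s ⟨hs, hsT⟩
    rw [hσ] at h3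
    change ‖q s - F s - (q t - F t)‖ ≤ _
    have : q s - F s - (q t - F t) = -(q t - q s - (t - s) • f (q t) t) -
        (F s - F t - (s - t) • f (q t) t) := by
      rw [sub_smul, sub_smul]; abel
    rw [this]
    refine (norm_sub_le _ _).trans ?_
    rw [norm_neg]
    rw [abs_sub_comm] at h3
    change ‖F s - F t - (s - t) • f (q t) t‖ ≤ _ at hs2
    linarith)
  refine IntSol.of_base haI hm hint fun t ht => ?_
  have h1 := hconst t ht
  have h2 : F a = 0 := intervalIntegral.integral_same
  change q t - F t = q a - F a at h1
  rw [h2, sub_zero] at h1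
  exact sub_eq_iff_eq_add.1 h1

/-- Conversely, integral solutions are solutions in the sense of the Δ-derivative. The
Δ-derivative at `a` also sees the points of `T` slightly to the left of `a`, so the integral
equation is needed on a slightly larger interval. -/
lemma isSolIccS_of_intSol (hT : IsClosed T) (hf : DeltaCaratheodory T Ω f) (hI : HInfty T Ω f)
    {t₀ : ℝ} {q₀ : EuclideanSpace ℝ (Fin n)} {q : ℝ → EuclideanSpace ℝ (Fin n)} {a' a b : ℝ}
    (ha' : a' ∈ T) (hb : b ∈ T) (haa : a' ≤ a) (hab : a < b)
    (hloc : ∀ᶠ s in nhds a, s ∈ T → a' ≤ s) (h0 : q t₀ = q₀) (h : IntSol T Ω f q a' b) :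
    IsSolIccS T Ω f t₀ q₀ q a b := by
  have hab' := haa.trans_lt hab
  have hsub : Icc a b ∩ T ⊆ Icc a' b ∩ T := inter_subset_inter_left _ (Icc_subset_Icc_left haa)
  obtain ⟨M, hM0, hM⟩ := h.lipschitz hT hf hI hab' ha' hb
  have hloc' : ∀ t ∈ Icc a b, ∀ᶠ s in nhds t, s ∈ T → a' ≤ s := by
    intro t ht
    rcases eq_or_lt_of_le ht.1 with rfl | hlt
    · exact hloc
    · filter_upwards [Ioi_mem_nhds hlt] with s hs _
      exact haa.trans (le_of_lt hs)
  refine ⟨fun t ht => h.mem t (hsub ht), ?_, h0, ?_⟩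
  · intro ε hε
    refine ⟨ε / (M + 1), by positivity, fun m u v hu hv huv _ hs => ?_⟩
    rw [lt_div_iff₀ (by positivity)] at hs
    have h4 : 0 ≤ ∑ k ∈ Finset.range m, (v k - u k) :=
      Finset.sum_nonneg fun k hk => sub_nonneg.2 (huv k (Finset.mem_range.1 hk))
    have h3 : ∑ k ∈ Finset.range m, ‖q (v k) - q (u k)‖ ≤
        M * ∑ k ∈ Finset.range m, (v k - u k) := by
      rw [Finset.mul_sum]
      refine Finset.sum_le_sum fun k hk => ?_
      have hk := Finset.mem_range.1 hk
      have := hM _ (hsub (hu k hk)) _ (hsub (hv k hk))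
      rwa [abs_of_nonneg (sub_nonneg.2 (huv k hk))] at this
    nlinarith
  · rw [ae_delta_iff hT (measurableSet_Ico.inter hT.measurableSet)]
    constructor
    · filter_upwards [ae_deriv_integral hab'.le h.int] with t h2 htT htI ε hε
      have htI' : t ∈ Icc a' b := ⟨haa.trans htI.1.1, htI.1.2.le⟩
      obtain ⟨hσ, hF'⟩ := h2 htT htI'
      refine ⟨_, inter_mem (inter_mem (deriv_eventually hF' hε)
        (hloc' t ⟨htI.1.1, htI.1.2.le⟩)) (Iio_mem_nhds htI.1.2), ?_⟩
      rintro s ⟨⟨⟨hs1, hs2⟩, hs3⟩, hsT⟩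
      have hsI : s ∈ Icc a' b ∩ T := ⟨⟨hs2 hsT, le_of_lt hs3⟩, hsT⟩
      have haI : a' ∈ Icc a' b := ⟨le_rfl, hab'.le⟩
      rw [hσ]
      change ‖(∫ x in a'..s, rhs T f q x) - (∫ x in a'..t, rhs T f q x) - (s - t) • f (q t) t‖ ≤
        ε * |s - t| at hs1
      rw [intervalIntegral.integral_interval_sub_left (intInt_sub h.int haI hsI.1)
        (intInt_sub h.int haI htI'), ← h.eq t ⟨htI', htT⟩ s hsI] at hs1
      have h7 : q t - q s - (t - s) • f (q t) t = -(q s - q t - (s - t) • f (q t) t) := by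
        rw [sub_smul, sub_smul]; abel
      rw [h7, norm_neg, abs_sub_comm]
      exact hs1
    · intro r hr hrs hrI ε hε
      have hrs' : r < tsSigma T r := hrs
      have hrI' : r ∈ Icc a' b ∩ T := ⟨⟨haa.trans hrI.1.1, hrI.1.2.le⟩, hr⟩
      have hg := h.gap hT hb (r := r) ⟨⟨haa.trans hrI.1.1, hrI.1.2⟩, hr⟩
      set y := f (q (tsSigma T r)) r with hy
      set η := ε * (tsSigma T r - r) / (M + ‖y‖ + 1) with hη
      have hden : 0 < M + ‖y‖ + 1 := by positivity
      have hη0 : 0 < η := div_pos (mul_pos hε (sub_pos.2 hrs')) hden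
      refine ⟨_, inter_mem (inter_mem (Metric.ball_mem_nhds r hη0)
        (hloc' r ⟨hrI.1.1, hrI.1.2.le⟩)) (Iio_mem_nhds hrs'), ?_⟩
      rintro s ⟨⟨⟨hs1, hs2⟩, hs3⟩, hsT⟩
      have hsr : s ≤ r := by
        by_contra! hlt
        exact not_lt.2 (sigma_le hsT hlt) hs3
      have hsI : s ∈ Icc a' b ∩ T := ⟨⟨hs2 hsT, hsr.trans hrI'.1.2⟩, hsT⟩
      rw [Metric.mem_ball, Real.dist_eq, abs_sub_comm, abs_of_nonneg (sub_nonneg.2 hsr), hη,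
        lt_div_iff₀ hden] at hs1
      have h5 := hM s hsI r hrI'
      rw [abs_of_nonneg (sub_nonneg.2 hsr)] at h5
      have h6 : q (tsSigma T r) - q s - (tsSigma T r - s) • y = (q r - q s) - (r - s) • y := by
        rw [hg, tsGrain, sub_smul, sub_smul, sub_smul]; abel
      rw [h6, abs_of_nonneg (by linarith)]
      refine (norm_sub_le _ _).trans ?_
      rw [norm_smul, Real.norm_eq_abs, abs_of_nonneg (sub_nonneg.2 hsr)]
      nlinarith [mul_nonneg hε.le (sub_nonneg.2 hsr)]

end Equivalence

/-! ### The maximal solution -/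

section Maximal

variable {n : ℕ} {T : Set ℝ} {Ω : Set (EuclideanSpace ℝ (Fin n))}
  {f : EuclideanSpace ℝ (Fin n) → ℝ → EuclideanSpace ℝ (Fin n)}
  {t₀ : ℝ} {q₀ : EuclideanSpace ℝ (Fin n)}

/-- `p` solves the initial value problem in integral form on `[a,b]_𝕋 ∋ t₀`; the degenerate cases
`a = t₀` and `b = t₀` are allowed whatever the position of `t₀` in `T`. -/
structure Witness (T : Set ℝ) (Ω : Set (EuclideanSpace ℝ (Fin n)))
    (f : EuclideanSpace ℝ (Fin n) → ℝ → EuclideanSpace ℝ (Fin n)) (t₀ : ℝ)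
    (q₀ : EuclideanSpace ℝ (Fin n)) (p : ℝ → EuclideanSpace ℝ (Fin n)) (a b : ℝ) : Prop where
  ha : a ∈ T
  hb : b ∈ T
  hat : a ≤ t₀
  htb : t₀ ≤ b
  sol : IntSol T Ω f p a b
  start : p t₀ = q₀

/-- The union of all intervals carrying a solution. -/
def maxInterval (T : Set ℝ) (Ω : Set (EuclideanSpace ℝ (Fin n)))
    (f : EuclideanSpace ℝ (Fin n) → ℝ → EuclideanSpace ℝ (Fin n)) (t₀ : ℝ)
    (q₀ : EuclideanSpace ℝ (Fin n)) : Set ℝ :=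
  {s | ∃ p a b, Witness T Ω f t₀ q₀ p a b ∧ s ∈ Icc a b}

/-- The common value at `s` of all solutions defined at `s` (junk value `0` where there are none). -/
def maxSol (T : Set ℝ) (Ω : Set (EuclideanSpace ℝ (Fin n)))
    (f : EuclideanSpace ℝ (Fin n) → ℝ → EuclideanSpace ℝ (Fin n)) (t₀ : ℝ)
    (q₀ : EuclideanSpace ℝ (Fin n)) (s : ℝ) : EuclideanSpace ℝ (Fin n) :=
  if h : s ∈ maxInterval T Ω f t₀ q₀ then h.choose s else 0

lemma witness_unique (hT : IsClosed T) (ht₀ : t₀ ∈ T)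
    (hR : ¬ IsGreatest T t₀ → HInfty T Ω f ∧ HrdLocLip T Ω f ∧ HforwRegr T Ω f)
    (hL : ¬ IsLeast T t₀ → HInfty T Ω f ∧ HldLocLip T Ω f ∧ HbackStab T Ω f)
    {p q : ℝ → EuclideanSpace ℝ (Fin n)} {a b c d t : ℝ} (hp : Witness T Ω f t₀ q₀ p a b)
    (hq : Witness T Ω f t₀ q₀ q c d) (htT : t ∈ T) (h1 : t ∈ Icc a b) (h2 : t ∈ Icc c d) :
    p t = q t := by
  have he : p t₀ = q t₀ := hp.start.trans hq.start.symm
  rcases lt_trichotomy t t₀ with h | h | h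
  · obtain ⟨hI, hld, -⟩ := hL fun hl => not_le.2 h (hl.2 htT)
    exact unique_left hT hI hld htT ht₀ h.le (hp.sol.mono h1.1 h.le hp.htb)
      (hq.sol.mono h2.1 h.le hq.htb) he ⟨⟨le_rfl, h.le⟩, htT⟩
  · rw [h, he]
  · obtain ⟨hI, hrd, hreg⟩ := hR fun hl => not_le.2 h (hl.2 htT)
    exact unique_right hT hI hrd hreg ht₀ htT h.le (hp.sol.mono hp.hat h.le h1.2)
      (hq.sol.mono hq.hat h.le h2.2) he ⟨⟨h.le, le_rfl⟩, htT⟩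

lemma maxSol_eq (hT : IsClosed T) (ht₀ : t₀ ∈ T)
    (hR : ¬ IsGreatest T t₀ → HInfty T Ω f ∧ HrdLocLip T Ω f ∧ HforwRegr T Ω f)
    (hL : ¬ IsLeast T t₀ → HInfty T Ω f ∧ HldLocLip T Ω f ∧ HbackStab T Ω f)
    {p : ℝ → EuclideanSpace ℝ (Fin n)} {a b : ℝ} (hp : Witness T Ω f t₀ q₀ p a b) :
    EqOn (maxSol T Ω f t₀ q₀) p (Icc a b ∩ T) := by
  intro t ht
  have h : t ∈ maxInterval T Ω f t₀ q₀ := ⟨p, a, b, hp, ht.1⟩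
  unfold maxSol
  rw [dif_pos h]
  obtain ⟨c, d, hw, hcd⟩ := h.choose_spec
  exact witness_unique hT ht₀ hR hL hw hp ht.2 hcd ht.1

lemma t₀_mem_maxInterval (ht₀ : t₀ ∈ T) (hq₀ : q₀ ∈ Ω) : t₀ ∈ maxInterval T Ω f t₀ q₀ := by
  refine ⟨fun _ => q₀, t₀, t₀, ⟨ht₀, ht₀, le_rfl, le_rfl, ⟨fun _ _ => hq₀, ?_, ?_⟩, rfl⟩, le_rfl,
    le_rfl⟩
  · exact IntervalIntegrable.refl
  · intro u hu v hv
    rw [le_antisymm hu.1.2 hu.1.1, le_antisymm hv.1.2 hv.1.1]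
    simp

lemma ordConnected_maxInterval : (maxInterval T Ω f t₀ q₀).OrdConnected := by
  refine ⟨?_⟩
  rintro x ⟨p, a, b, hp, hx⟩ y ⟨p', c, d, hp', hy⟩ z hz
  rcases le_total z t₀ with h | h
  · exact ⟨p, a, b, hp, hx.1.trans hz.1, h.trans hp.htb⟩
  · exact ⟨p', c, d, hp', hp'.hat.trans h, hz.2.trans hy.2⟩

lemma maxSol_witness (hT : IsClosed T) (ht₀ : t₀ ∈ T)
    (hR : ¬ IsGreatest T t₀ → HInfty T Ω f ∧ HrdLocLip T Ω f ∧ HforwRegr T Ω f)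
    (hL : ¬ IsLeast T t₀ → HInfty T Ω f ∧ HldLocLip T Ω f ∧ HbackStab T Ω f) {a b : ℝ}
    (ha : a ∈ maxInterval T Ω f t₀ q₀ ∩ T) (hb : b ∈ maxInterval T Ω f t₀ q₀ ∩ T)
    (hat : a ≤ t₀) (htb : t₀ ≤ b) :
    Witness T Ω f t₀ q₀ (maxSol T Ω f t₀ q₀) a b := by
  obtain ⟨⟨p, a₁, b₁, hp, hap⟩, haT⟩ := ha
  obtain ⟨⟨p', a₂, b₂, hp', hbp⟩, hbT⟩ := hb
  have e1 := maxSol_eq hT ht₀ hR hL hp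
  have e2 := maxSol_eq hT ht₀ hR hL hp'
  have h1 := (hp.sol.mono hap.1 hat hp.htb).congr hT hat haT ht₀ (e1.mono
    (inter_subset_inter_left _ (Icc_subset_Icc hap.1 hp.htb)))
  have h2 := (hp'.sol.mono hp'.hat htb hbp.2).congr hT htb ht₀ hbT (e2.mono
    (inter_subset_inter_left _ (Icc_subset_Icc hp'.hat hbp.2)))
  exact ⟨haT, hbT, hat, htb, h1.glue hat htb ht₀ h2,
    (e1 ⟨⟨hp.hat, hp.htb⟩, ht₀⟩).trans hp.start⟩

lemma maxInterval_right (hT : IsClosed T) (hf : DeltaCaratheodory T Ω f) (ht₀ : t₀ ∈ T)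
    (hq₀ : q₀ ∈ Ω)
    (hR : ¬ IsGreatest T t₀ → HInfty T Ω f ∧ HrdLocLip T Ω f ∧ HforwRegr T Ω f)
    (hL : ¬ IsLeast T t₀ → HInfty T Ω f ∧ HldLocLip T Ω f ∧ HbackStab T Ω f) {b : ℝ}
    (hb : b ∈ maxInterval T Ω f t₀ q₀ ∩ T) (htb : t₀ ≤ b) (hng : ¬ IsGreatest T b) :
    ∃ d ∈ maxInterval T Ω f t₀ q₀ ∩ T, b < d := by
  have hw := maxSol_witness hT ht₀ hR hL ⟨t₀_mem_maxInterval ht₀ hq₀, ht₀⟩ hb le_rfl htb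
  obtain ⟨hI, hrd, hreg⟩ := hR fun hg => hng ⟨hb.2, fun s hs => (hg.2 hs).trans htb⟩
  obtain ⟨d, hd, hbd, p, hp, hpb⟩ := step_right hT hf hI hrd hreg hb.2 hng
    (hw.sol.mem b ⟨⟨htb, le_rfl⟩, hb.2⟩)
  refine ⟨d, ⟨⟨_, t₀, d, ⟨ht₀, hd, le_rfl, htb.trans hbd.le,
    hw.sol.concat hT htb hbd.le ht₀ hb.2 hd hp hpb.symm, ?_⟩, htb.trans hbd.le, le_rfl⟩, hd⟩, hbd⟩
  simp [htb, hw.start]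

lemma maxInterval_left (hT : IsClosed T) (hf : DeltaCaratheodory T Ω f) (ht₀ : t₀ ∈ T)
    (hq₀ : q₀ ∈ Ω)
    (hR : ¬ IsGreatest T t₀ → HInfty T Ω f ∧ HrdLocLip T Ω f ∧ HforwRegr T Ω f)
    (hL : ¬ IsLeast T t₀ → HInfty T Ω f ∧ HldLocLip T Ω f ∧ HbackStab T Ω f) {a : ℝ}
    (ha : a ∈ maxInterval T Ω f t₀ q₀ ∩ T) (hat : a ≤ t₀) (hnl : ¬ IsLeast T a) :
    ∃ c ∈ maxInterval T Ω f t₀ q₀ ∩ T, c < a := by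
  have hw := maxSol_witness hT ht₀ hR hL ha ⟨t₀_mem_maxInterval ht₀ hq₀, ht₀⟩ hat le_rfl
  obtain ⟨hI, hld, hst⟩ := hL fun hg => hnl ⟨ha.2, fun s hs => hat.trans (hg.2 hs)⟩
  obtain ⟨c, hc, hca, p, hp, hpa⟩ := step_left hT hf hI hld hst ha.2 hnl
    (hw.sol.mem a ⟨⟨le_rfl, hat⟩, ha.2⟩)
  refine ⟨c, ⟨⟨_, c, t₀, ⟨hc, ht₀, hca.le.trans hat, le_rfl,
    hp.concat hT hca.le hat hc ha.2 ht₀ hw.sol hpa, ?_⟩, le_rfl, hca.le.trans hat⟩, hc⟩, hca⟩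
  rcases eq_or_lt_of_le hat with h | h
  · subst h; simp [hpa, hw.start]
  · simp [not_le.2 h, hw.start]

lemma Trile.lt {a b : ℝ} (h : Trile T t₀ a b) : a ≤ t₀ ∧ t₀ ≤ b ∧ a < b := by
  rcases h with ⟨-, h1, h2⟩ | ⟨-, h1, h2⟩ | ⟨-, -, h1, h2⟩ <;> refine ⟨?_, ?_, ?_⟩ <;> linarith

lemma Trile.enlarge {a b t : ℝ} (h : Trile T t₀ a b) (ht : t ∈ T) :
    Trile T t₀ (min a t) (max b t) := by
  rcases h with ⟨h0, h1, h2⟩ | ⟨h0, h1, h2⟩ | ⟨h0, h0', h1, h2⟩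
  · refine Or.inl ⟨h0, ?_, h2.trans_le (le_max_left _ _)⟩
    rw [h1]; exact min_eq_left (h0.2 ht)
  · refine Or.inr (Or.inl ⟨h0, (min_le_left _ _).trans_lt h1, ?_⟩)
    rw [← h2]; exact (max_eq_left (h0.2 ht)).symm
  · exact Or.inr (Or.inr ⟨h0, h0', (min_le_left _ _).trans_lt h1, h2.trans_le (le_max_left _ _)⟩)

lemma maxSol_isSolS (hT : IsClosed T) (hTn : T.Nontrivial) (hf : DeltaCaratheodory T Ω f)
    (ht₀ : t₀ ∈ T) (hq₀ : q₀ ∈ Ω) (hI : HInfty T Ω f)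
    (hR : ¬ IsGreatest T t₀ → HInfty T Ω f ∧ HrdLocLip T Ω f ∧ HforwRegr T Ω f)
    (hL : ¬ IsLeast T t₀ → HInfty T Ω f ∧ HldLocLip T Ω f ∧ HbackStab T Ω f) :
    IsSolS T Ω f t₀ q₀ (maxSol T Ω f t₀ q₀) (maxInterval T Ω f t₀ q₀) := by
  have h0 : t₀ ∈ maxInterval T Ω f t₀ q₀ ∩ T := ⟨t₀_mem_maxInterval ht₀ hq₀, ht₀⟩
  refine ⟨⟨ordConnected_maxInterval, ?_⟩, ?_, ?_⟩
  · by_cases hl : IsLeast T t₀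
    · have hg : ¬ IsGreatest T t₀ := fun hg => by
        obtain ⟨x, hx, y, hy, hxy⟩ := hTn
        exact hxy ((le_antisymm (hg.2 hx) (hl.2 hx)).trans (le_antisymm (hl.2 hy) (hg.2 hy)))
      obtain ⟨d, hd, hbd⟩ := maxInterval_right hT hf ht₀ hq₀ hR hL h0 le_rfl hg
      exact ⟨t₀, h0, d, hd, Or.inl ⟨hl, rfl, hbd⟩⟩
    · obtain ⟨c, hc, hca⟩ := maxInterval_left hT hf ht₀ hq₀ hR hL h0 le_rfl hl
      by_cases hg : IsGreatest T t₀
      · exact ⟨c, hc, t₀, h0, Or.inr (Or.inl ⟨hg, hca, rfl⟩)⟩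
      · obtain ⟨d, hd, hbd⟩ := maxInterval_right hT hf ht₀ hq₀ hR hL h0 le_rfl hg
        exact ⟨c, hc, d, hd, Or.inr (Or.inr ⟨hl, hg, hca, hbd⟩)⟩
  · rintro t ⟨⟨p, a, b, hp, ht⟩, htT⟩
    rw [maxSol_eq hT ht₀ hR hL hp ⟨ht, htT⟩]
    exact hp.sol.mem t ⟨ht, htT⟩
  · intro a ha b hb htr
    obtain ⟨hat, htb, hab⟩ := htr.lt
    by_cases hl : IsLeast T a
    · have hw := maxSol_witness hT ht₀ hR hL ha hb hat htb
      exact isSolIccS_of_intSol hT hf hI ha.2 hb.2 le_rfl hab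
        (Eventually.of_forall fun s hs => hl.2 hs) hw.start hw.sol
    · obtain ⟨c, hc, hca⟩ := maxInterval_left hT hf ht₀ hq₀ hR hL ha hat hl
      have hw := maxSol_witness hT ht₀ hR hL hc hb (hca.le.trans hat) htb
      exact isSolIccS_of_intSol hT hf hI hc.2 hb.2 hca.le hab
        (Filter.mem_of_superset (Ioi_mem_nhds hca) fun s hs _ => le_of_lt hs) hw.start hw.sol

lemma maxSol_extends (hT : IsClosed T) (hf : DeltaCaratheodory T Ω f)
    (ht₀ : t₀ ∈ T) (hI : HInfty T Ω f)
    (hR : ¬ IsGreatest T t₀ → HInfty T Ω f ∧ HrdLocLip T Ω f ∧ HforwRegr T Ω f)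
    (hL : ¬ IsLeast T t₀ → HInfty T Ω f ∧ HldLocLip T Ω f ∧ HbackStab T Ω f)
    {q₁ : ℝ → EuclideanSpace ℝ (Fin n)} {I₁ : Set ℝ} (h : IsSolS T Ω f t₀ q₀ q₁ I₁) :
    SolExtends T (maxSol T Ω f t₀ q₀) (maxInterval T Ω f t₀ q₀) q₁ I₁ := by
  obtain ⟨⟨-, a, ha, b, hb, htr⟩, -, hsol⟩ := h
  have key : ∀ t ∈ I₁ ∩ T, ∃ c d, Witness T Ω f t₀ q₀ q₁ c d ∧ t ∈ Icc c d := by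
    intro t ht
    have hmin : min a t ∈ I₁ ∩ T := by
      rcases min_choice a t with h | h <;> rw [h] <;> assumption
    have hmax : max b t ∈ I₁ ∩ T := by
      rcases max_choice b t with h | h <;> rw [h] <;> assumption
    have htr' := htr.enlarge ht.2
    obtain ⟨h1, h2, h3⟩ := htr'.lt
    have hs := hsol _ hmin _ hmax htr'
    exact ⟨_, _, ⟨hmin.2, hmax.2, h1, h2, intSol_of_isSolIccS hT hf hI hmin.2 hmax.2 h3 hs,
      hs.2.2.1⟩, min_le_right _ _, le_max_right _ _⟩
  constructor
  · intro t ht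
    obtain ⟨c, d, hw, hcd⟩ := key t ht
    exact ⟨⟨q₁, c, d, hw, hcd⟩, ht.2⟩
  · intro t ht
    obtain ⟨c, d, hw, hcd⟩ := key t ht
    exact maxSol_eq hT ht₀ hR hL hw ⟨hcd, ht.2⟩

end Maximal

theorem stmt5 {n : ℕ}
    (T : Set ℝ) (hTclosed : IsClosed T) (hTnontriv : T.Nontrivial)
    (Ω : Set (EuclideanSpace ℝ (Fin n))) (hΩopen : IsOpen Ω) (hΩne : Ω.Nonempty)
    (f : EuclideanSpace ℝ (Fin n) → ℝ → EuclideanSpace ℝ (Fin n)) (hf : DeltaCaratheodory T Ω f)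
    (t₀ : ℝ) (ht₀ : t₀ ∈ T) (q₀ : EuclideanSpace ℝ (Fin n)) (hq₀ : q₀ ∈ Ω)
    (h1 : IsLeast T t₀ → HInfty T Ω f ∧ HrdLocLip T Ω f ∧ HforwRegr T Ω f)
    (h2 : IsGreatest T t₀ → HInfty T Ω f ∧ HldLocLip T Ω f ∧ HbackStab T Ω f)
    (h3 : ¬ IsLeast T t₀ → ¬ IsGreatest T t₀ →
      HInfty T Ω f ∧ HrdLocLip T Ω f ∧ HforwRegr T Ω f ∧ HldLocLip T Ω f ∧ HbackStab T Ω f) :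
    ∃ (q : ℝ → EuclideanSpace ℝ (Fin n)) (I : Set ℝ),
      IsMaxSolS T Ω f t₀ q₀ q I ∧
      (∀ q₁ I₁, IsMaxSolS T Ω f t₀ q₀ q₁ I₁ → I₁ ∩ T = I ∩ T ∧ EqOn q₁ q (I ∩ T)) ∧
      (∀ q₁ I₁, IsSolS T Ω f t₀ q₀ q₁ I₁ → SolExtends T q I q₁ I₁) := by
  have hnot : ¬ (IsLeast T t₀ ∧ IsGreatest T t₀) := by
    rintro ⟨hl, hg⟩
    obtain ⟨x, hx, y, hy, hxy⟩ := hTnontriv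
    exact hxy ((le_antisymm (hg.2 hx) (hl.2 hx)).trans (le_antisymm (hl.2 hy) (hg.2 hy)))
  have hR : ¬ IsGreatest T t₀ → HInfty T Ω f ∧ HrdLocLip T Ω f ∧ HforwRegr T Ω f := fun hg => by
    by_cases hl : IsLeast T t₀
    · exact h1 hl
    · exact ⟨(h3 hl hg).1, (h3 hl hg).2.1, (h3 hl hg).2.2.1⟩
  have hL : ¬ IsLeast T t₀ → HInfty T Ω f ∧ HldLocLip T Ω f ∧ HbackStab T Ω f := fun hl => by
    by_cases hg : IsGreatest T t₀
    · exact h2 hg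
    · exact ⟨(h3 hl hg).1, (h3 hl hg).2.2.2⟩
  have hI : HInfty T Ω f := by
    by_cases hl : IsLeast T t₀
    · exact (h1 hl).1
    · exact (hL hl).1
  have hsol := maxSol_isSolS hTclosed hTnontriv hf ht₀ hq₀ hI hR hL
  have hext : ∀ q₁ I₁, IsSolS T Ω f t₀ q₀ q₁ I₁ →
      SolExtends T (maxSol T Ω f t₀ q₀) (maxInterval T Ω f t₀ q₀) q₁ I₁ := fun q₁ I₁ h =>
    maxSol_extends hTclosed hf ht₀ hI hR hL h
  refine ⟨_, _, ⟨hsol, fun q₁ I₁ h h' => (hext q₁ I₁ h).1.antisymm h'.1⟩, fun q₁ I₁ h => ?_, hext⟩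
  have he := hext q₁ I₁ h.1
  have hII := h.2 _ _ hsol he
  refine ⟨hII.symm, fun t ht => (he.2 ?_).symm⟩
  rwa [← hII]

end
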